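/- arXiv:math/0703734 — 2 statements merged into one kernel-verified Lean document; each statement's English description precedes it below -/
import Mathlib

section
/- Let N ≥ 2, let D ⊆ ℝ^N be a compact convex set with ℋ^{N−1}(∂D) = S < ∞, and let Ω ⊆ D be an open convex set with Lebesgue measure |Ω| = m > 0. Then Ω contains an open ball of radius m/S; that is, the inradius of Ω is strictly greater than |Ω| / ℋ^{N−1}(∂Ω) ≥ m/S. -/
open MeasureTheory Metric Filter Topology

noncomputable section

/-!
Let `Ω` be convex and let `Ω_τ` be its inner parallel set at depth `τ`. A point at depth `s` in `Ω`
is `y + s ν`, with `y` a nearest boundary point and `ν` the inner unit normal there. The projection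
onto a convex set is a contraction, so for depths `s` in a short interval `[a, a + δ]` the map
`y ↦ y + s ν` is nearly a contraction of the boundary; covering `∂Ω` by small sets bounds the volume
of such a band by about `δ ℋⁿ(∂Ω)`, and summing over geometrically decreasing bands gives
`|Ω \ Ω_τ| ≤ τ ℋⁿ(∂Ω)`.

With `r` the inradius and `τ = r / 2`, applying this to `Ω` and then to `Ω_τ`, whose own inner
parallel set at depth `τ` is empty, gives `|Ω| ≤ τ (ℋⁿ(∂Ω) + ℋⁿ(∂Ω_τ))`. This is strictly less than
`r ℋⁿ(∂Ω)`: since `Ω_τ` lies in a proper contraction of `Ω`, and the boundary measure is monotone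
under inclusion of convex sets, `ℋⁿ(∂Ω_τ) < ℋⁿ(∂Ω)`.
-/

open Set Module
open scoped ENNReal NNReal Pointwise RealInnerProductSpace

section Projection

variable {F : Type*} [NormedAddCommGroup F] [InnerProductSpace ℝ F] {K : Set F}

theorem dist_le_dist_of_inner_sub_le_zero {x x' z z' : F} (h : ⟪x - z, z' - z⟫ ≤ 0)
    (h' : ⟪x' - z', z - z'⟫ ≤ 0) : dist z z' ≤ dist x x' := by
  rcases eq_or_ne z z' with rfl | hne
  · simp
  rw [dist_eq_norm, dist_eq_norm]
  refine le_of_mul_le_mul_right ?_ (norm_sub_pos_iff.2 hne)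
  calc ‖z - z'‖ * ‖z - z'‖
      = ⟪x - x', z - z'⟫ + ⟪x - z, z' - z⟫ + ⟪x' - z', z - z'⟫ := by
        rw [← real_inner_self_eq_norm_mul_norm]
        simp only [inner_sub_left, inner_sub_right]
        ring
    _ ≤ ⟪x - x', z - z'⟫ := by linarith
    _ ≤ ‖x - x'‖ * ‖z - z'‖ := real_inner_le_norm _ _

theorem inner_sub_le_zero_of_forall_dist_le (hK : Convex ℝ K) {x z : F} (hz : z ∈ K)
    (h : ∀ w ∈ K, dist x z ≤ dist x w) : ∀ w ∈ K, ⟪x - z, w - z⟫ ≤ 0 := by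
  have : Nonempty K := ⟨⟨z, hz⟩⟩
  refine (norm_eq_iInf_iff_real_inner_le_zero hK hz).1 (le_antisymm (le_ciInf fun w => ?_) ?_)
  · simpa only [dist_eq_norm] using h w w.2
  · exact ciInf_le (f := fun w : K => ‖x - w‖) ⟨0, forall_mem_range.2 fun _ => norm_nonneg _⟩
      ⟨z, hz⟩

theorem exists_lipschitzWith_one_projection (hne : K.Nonempty) (hcomplete : IsComplete K)
    (hK : Convex ℝ K) :
    ∃ P : F → F, LipschitzWith 1 P ∧
      ∀ x, ∀ z ∈ K, (∀ w ∈ K, ⟪x - z, w - z⟫ ≤ 0) → P x = z := by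
  choose P hPK hPmin using exists_norm_eq_iInf_of_complete_convex hne hcomplete hK
  have hP : ∀ x, ∀ w ∈ K, ⟪x - P x, w - P x⟫ ≤ 0 := fun x =>
    (norm_eq_iInf_iff_real_inner_le_zero hK (hPK x)).1 (hPmin x)
  refine ⟨P, LipschitzWith.of_dist_le_mul fun x x' => ?_, fun x z hz h => ?_⟩
  · simpa using dist_le_dist_of_inner_sub_le_zero (hP x _ (hPK x')) (hP x' _ (hPK x))
  · simpa using dist_le_dist_of_inner_sub_le_zero (hP x z hz) (h _ (hPK x))

end Projection

section FrontierMonotone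

theorem exists_nonneg_add_smul_mem_frontier {F : Type*} [NormedAddCommGroup F] [NormedSpace ℝ F]
    {C : Set F} (hC : Bornology.IsBounded C) {y v : F} (hy : y ∈ closure C) (hv : v ≠ 0) :
    ∃ s : ℝ, 0 ≤ s ∧ y + s • v ∈ frontier C := by
  let ray : ℝ≥0 → F := fun s => y + (s : ℝ) • v
  have hray : Continuous ray := by fun_prop
  have hleaves : ray ⁻¹' closure C ≠ univ := by
    obtain ⟨M, hM⟩ := hC.closure.subset_closedBall y
    obtain ⟨s, hs⟩ := exists_nat_gt (M / ‖v‖)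
    refine fun huniv => hs.not_ge ((le_div_iff₀ (norm_pos_iff.2 hv)).2 ?_)
    have hmem : (s : ℝ≥0) ∈ ray ⁻¹' closure C := huniv.ge (mem_univ _)
    simpa [ray, norm_smul] using hM hmem
  obtain ⟨s, hs⟩ := nonempty_frontier_iff.2 ⟨⟨0, by simpa [ray] using hy⟩, hleaves⟩
  exact ⟨s, s.2, frontier_closure_subset (hray.frontier_preimage_subset _ hs)⟩

variable {F : Type*} [NormedAddCommGroup F] [InnerProductSpace ℝ F] [CompleteSpace F] {K : Set F}

theorem exists_ne_zero_forall_inner_sub_le_zero_of_mem_frontier (hK : Convex ℝ K)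
    (ho : IsOpen K) {y : F} (hy : y ∈ frontier K) :
    ∃ v : F, v ≠ 0 ∧ ∀ w ∈ closure K, ⟪v, w - y⟫ ≤ 0 := by
  obtain ⟨hy_closure, hy_notMem⟩ := ho.frontier_eq ▸ hy
  obtain ⟨f, hf0, hf⟩ := geometric_hahn_banach_of_nonempty_interior_point hK
    (ho.interior_eq.symm ▸ hy_notMem)
    (ho.interior_eq.symm ▸ closure_nonempty_iff.1 ⟨y, hy_closure⟩)
  refine ⟨(InnerProductSpace.toDual ℝ F).symm f, by simpa using hf0, fun w hw => ?_⟩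
  have hfw : f w ≤ f y :=
    closure_minimal hf (isClosed_le f.continuous continuous_const) hw
  rwa [InnerProductSpace.toDual_symm_apply, map_sub, sub_nonpos]

theorem hausdorffMeasure_frontier_mono [MeasurableSpace F] [BorelSpace F] {C : Set F}
    (hK : Convex ℝ K) (ho : IsOpen K) (hC : Bornology.IsBounded C) (hKC : K ⊆ C) {d : ℝ}
    (hd : 0 ≤ d) : μH[d] (frontier K) ≤ μH[d] (frontier C) := by
  rcases K.eq_empty_or_nonempty with rfl | hne
  · simp
  obtain ⟨P, hP, hP_eq⟩ := exists_lipschitzWith_one_projection hne.closure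
    isClosed_closure.isComplete hK.closure
  -- Every `y ∈ ∂K` is the projection of a point of `∂C` on the outer normal ray at `y`.
  have hsubset : frontier K ⊆ P '' frontier C := by
    intro y hy
    obtain ⟨v, hv0, hv⟩ := exists_ne_zero_forall_inner_sub_le_zero_of_mem_frontier hK ho hy
    have hyK : y ∈ closure K := frontier_subset_closure hy
    obtain ⟨s, hs, hs_frontier⟩ :=
      exists_nonneg_add_smul_mem_frontier hC (closure_mono hKC hyK) hv0
    refine ⟨y + s • v, hs_frontier, hP_eq _ y hyK fun w hw => ?_⟩
    rw [add_sub_cancel_left, real_inner_smul_left]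
    exact mul_nonpos_of_nonneg_of_nonpos hs (hv w hw)
  calc μH[d] (frontier K) ≤ μH[d] (P '' frontier C) := measure_mono hsubset
    _ ≤ μH[d] (frontier C) := by simpa using hP.hausdorffMeasure_image_le hd (frontier C)

end FrontierMonotone

section InnerParallelSet

variable {X : Type*} [PseudoMetricSpace X] {Ω : Set X} {x : X} {r τ : ℝ}

/-- The inner parallel set of `Ω` at depth `τ`: the points at distance more than `τ` from `Ωᶜ`.
It is phrased with balls rather than `infDist x Ωᶜ`, which has the junk value `0` for
`Ω = univ`. -/
def innerParallelSet (Ω : Set X) (τ : ℝ) : Set X :=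
  {x | ∃ r, τ < r ∧ ball x r ⊆ Ω}

/-- The inradius of `Ω`, the supremum of the radii of the balls contained in `Ω`. It has the junk
value `0` if these radii are unbounded. -/
def inradius (Ω : Set X) : ℝ :=
  sSup {r : ℝ | 0 < r ∧ ∃ x, ball x r ⊆ Ω}

theorem mem_innerParallelSet_iff_lt_infDist (hΩ : Ω ≠ univ) :
    x ∈ innerParallelSet Ω τ ↔ τ < infDist x Ωᶜ := by
  refine ⟨fun ⟨r, hr, hball⟩ => hr.trans_le ?_, fun h => ⟨_, h, ball_infDist_compl_subset⟩⟩
  refine (le_infDist (nonempty_compl.2 hΩ)).2 fun y hy => ?_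
  by_contra! hlt
  exact hy (hball (mem_ball'.2 hlt))

theorem innerParallelSet_univ : innerParallelSet (univ : Set X) τ = univ :=
  eq_univ_of_forall fun _ => ⟨τ + 1, lt_add_one τ, subset_univ _⟩

theorem infDist_compl_pos (ho : IsOpen Ω) (hΩ : Ω ≠ univ) (hx : x ∈ Ω) : 0 < infDist x Ωᶜ :=
  (ho.isClosed_compl.notMem_iff_infDist_pos (nonempty_compl.2 hΩ)).1 (not_not.2 hx)

theorem isOpen_innerParallelSet : IsOpen (innerParallelSet Ω τ) := by
  refine isOpen_iff.2 fun x ⟨r, hr, hball⟩ => ⟨(r - τ) / 2, by linarith, fun y hy => ?_⟩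
  refine ⟨(r + τ) / 2, by linarith, (ball_subset_ball' ?_).trans hball⟩
  linarith [mem_ball.1 hy]

theorem innerParallelSet_subset (hτ : 0 ≤ τ) : innerParallelSet Ω τ ⊆ Ω :=
  fun _ ⟨_, hr, hball⟩ => hball (mem_ball_self (hτ.trans_lt hr))

theorem inradius_nonneg : 0 ≤ inradius Ω :=
  Real.sSup_nonneg fun _ hr => hr.1.le

theorem exists_ball_subset_of_lt_inradius [Nonempty X] (h : r < inradius Ω) :
    ∃ x, ball x r ⊆ Ω := by
  rcases le_or_gt r 0 with hr | hr
  · exact ⟨Classical.arbitrary X, by simp [ball_eq_empty.2 hr]⟩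
  have hne : {r : ℝ | 0 < r ∧ ∃ x, ball x r ⊆ Ω}.Nonempty := by
    by_contra! hempty
    rw [inradius, hempty, Real.sSup_empty] at h
    exact hr.not_gt h
  obtain ⟨s, ⟨-, x, hx⟩, hrs⟩ := exists_lt_of_lt_csSup hne h
  exact ⟨x, (ball_subset_ball hrs.le).trans hx⟩

variable {V : Type*} [NormedAddCommGroup V] [NormedSpace ℝ V] {U : Set V}

theorem convex_setOf_ball_subset (hU : Convex ℝ U) (a : ℝ) : Convex ℝ {x | ball x a ⊆ U} := by
  intro x hx y hy s t hs ht hst w hw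
  set u := w - (s • x + t • y) with hu
  have hu_norm : ‖u‖ < a := by rwa [hu, ← dist_eq_norm]
  have hw_eq : w = s • (x + u) + t • (y + u) := by
    rw [smul_add, smul_add, add_add_add_comm, ← add_smul, hst, one_smul, hu, add_sub_cancel]
  rw [hw_eq]
  exact hU (hx (by simpa using hu_norm)) (hy (by simpa using hu_norm)) hs ht hst

theorem convex_innerParallelSet (hU : Convex ℝ U) : Convex ℝ (innerParallelSet U τ) :=
  fun _ ⟨r, hr, hx⟩ _ ⟨r', hr', hy⟩ _ _ hs ht hst =>
    ⟨min r r', lt_min hr hr', convex_setOf_ball_subset hU _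
      ((ball_subset_ball (min_le_left _ _)).trans hx)
      ((ball_subset_ball (min_le_right _ _)).trans hy) hs ht hst⟩

theorem innerParallelSet_innerParallelSet_subset {σ : ℝ} (hσ : 0 ≤ σ) (hτ : 0 ≤ τ) :
    innerParallelSet (innerParallelSet U σ) τ ⊆ innerParallelSet U (σ + τ) := by
  rintro x ⟨r, hr, hball⟩
  refine ⟨σ + r, by linarith, fun z hz => ?_⟩
  rcases hσ.eq_or_lt with rfl | hσ
  · exact innerParallelSet_subset le_rfl (hball (by simpa using hz))
  obtain ⟨y, hzy, hyx⟩ := exists_dist_lt_lt hσ (hτ.trans_lt hr) (by simpa [add_comm] using hz)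
  obtain ⟨s, hs, hsU⟩ := hball hyx
  exact hsU (mem_ball.2 (hzy.trans hs))

theorem bddAbove_setOf_ball_subset [Nontrivial V] (hU : Bornology.IsBounded U) :
    BddAbove {r : ℝ | 0 < r ∧ ∃ x, ball x r ⊆ U} := by
  refine ⟨diam U, fun r ⟨hr, x, hball⟩ => ?_⟩
  have := diam_mono hball hU
  rw [diam_ball_eq x hr.le] at this
  linarith

theorem innerParallelSet_inradius [Nontrivial V] (hU : Bornology.IsBounded U) :
    innerParallelSet U (inradius U) = ∅ := by
  refine eq_empty_of_forall_notMem fun x ⟨r, hr, hball⟩ => hr.not_ge ?_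
  exact le_csSup (bddAbove_setOf_ball_subset hU) ⟨inradius_nonneg.trans_lt hr, x, hball⟩

theorem inradius_pos [Nontrivial V] (hU : Bornology.IsBounded U) (ho : IsOpen U)
    (hne : U.Nonempty) : 0 < inradius U := by
  obtain ⟨x, hx⟩ := hne
  obtain ⟨ε, hε, hball⟩ := isOpen_iff.1 ho x hx
  exact hε.trans_le (le_csSup (bddAbove_setOf_ball_subset hU) ⟨hε, x, hball⟩)

theorem innerParallelSet_subset_smul {M : ℝ} (hM : 0 < M) (hU : ∀ x ∈ U, ‖x‖ ≤ M)
    (hτ : 0 ≤ τ) : innerParallelSet U τ ⊆ (1 + τ / M)⁻¹ • U := by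
  intro x hx
  rw [mem_inv_smul_set_iff₀ (by positivity)]
  have hxM : ‖x‖ ≤ M := hU x (innerParallelSet_subset hτ hx)
  obtain ⟨r, hr, hball⟩ := hx
  refine hball (mem_ball.2 (lt_of_le_of_lt ?_ hr))
  calc dist ((1 + τ / M) • x) x = τ / M * ‖x‖ := by
        rw [dist_eq_norm, add_smul, one_smul, add_sub_cancel_left, norm_smul,
          Real.norm_of_nonneg (by positivity)]
    _ ≤ τ / M * M := by gcongr
    _ = τ := div_mul_cancel₀ τ hM.ne'

theorem frontier_smul₀ {c : ℝ} (hc : c ≠ 0) (s : Set V) : frontier (c • s) = c • frontier s :=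
  ((Homeomorph.smulOfNeZero c hc).image_frontier s).symm

theorem hausdorffMeasure_frontier_innerParallelSet_lt {F : Type*} [NormedAddCommGroup F]
    [InnerProductSpace ℝ F] [CompleteSpace F] [MeasurableSpace F] [BorelSpace F] {Ω : Set F}
    (hc : Convex ℝ Ω) (hb : Bornology.IsBounded Ω) (hτ : 0 < τ) {d : ℝ} (hd : 0 < d)
    (h0 : μH[d] (frontier Ω) ≠ 0) (hfin : μH[d] (frontier Ω) ≠ ∞) :
    μH[d] (frontier (innerParallelSet Ω τ)) < μH[d] (frontier Ω) := by
  obtain ⟨M, hM, hΩM⟩ := hb.exists_pos_norm_le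
  set c : ℝ := (1 + τ / M)⁻¹
  have hc0 : 0 < c := by positivity
  have hc1 : c < 1 := inv_lt_one_of_one_lt₀ (lt_add_of_pos_right 1 (div_pos hτ hM))
  calc μH[d] (frontier (innerParallelSet Ω τ))
      ≤ μH[d] (frontier (c • Ω)) :=
        hausdorffMeasure_frontier_mono (convex_innerParallelSet hc) isOpen_innerParallelSet
          (hb.smul₀ c) (innerParallelSet_subset_smul hM hΩM hτ.le) hd.le
    _ = ((‖c‖₊ ^ d : ℝ≥0) : ℝ≥0∞) * μH[d] (frontier Ω) := by
        rw [frontier_smul₀ hc0.ne', Measure.hausdorffMeasure_smul₀ hd.le hc0.ne']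
        rfl
    _ < 1 * μH[d] (frontier Ω) := by
        refine ENNReal.mul_lt_mul_left h0 hfin (ENNReal.coe_lt_one_iff.2 ?_)
        refine NNReal.rpow_lt_one ?_ hd
        rwa [← NNReal.coe_lt_one, coe_nnnorm, Real.norm_of_nonneg hc0.le]
    _ = μH[d] (frontier Ω) := one_mul _

end InnerParallelSet

section Covering

theorem measure_le_mul_hausdorffMeasure_of_mapsTo {X Y : Type*} [MeasurableSpace X]
    {μ : Measure X} [EMetricSpace Y] [MeasurableSpace Y] [BorelSpace Y] {p : X → Y} {A : Set X}
    {B : Set Y} (hp : MapsTo p A B) {d : ℝ} {C ε : ℝ≥0∞} (hC₀ : C ≠ 0) (hC : C ≠ ∞) (hε : 0 < ε)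
    (h : ∀ t, ediam t ≤ ε → μ (A ∩ p ⁻¹' t) ≤ C * ediam t ^ d) : μ A ≤ C * μH[d] B := by
  let ν : OuterMeasure Y := OuterMeasure.map p (OuterMeasure.restrict A μ.toOuterMeasure)
  have hν : ∀ t, ν t = μ (A ∩ p ⁻¹' t) := fun t => by simp [ν, inter_comm]
  have hle : C⁻¹ • ν ≤ OuterMeasure.mkMetric fun r => r ^ d := by
    refine OuterMeasure.le_mkMetric _ _ ε hε fun t ht => ?_
    rw [smul_apply, smul_eq_mul, ENNReal.inv_mul_le_iff hC₀ hC, hν]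
    exact h t ht
  calc μ A = ν B := by rw [hν, inter_eq_left.2 (show A ⊆ p ⁻¹' B from hp)]
    _ ≤ C * OuterMeasure.mkMetric (fun r => r ^ d) B :=
        (ENNReal.inv_mul_le_iff hC₀ hC).1 (hle B)
    _ = C * μH[d] B := by rw [OuterMeasure.coe_mkMetric, Measure.hausdorffMeasure]

end Covering

section ThinSets

variable {E : Type*} [NormedAddCommGroup E] [InnerProductSpace ℝ E] [FiniteDimensional ℝ E]
  {ι : Type*} [Fintype ι]

theorem exists_orthonormalBasis_apply_eq (hι : finrank ℝ E = Fintype.card ι) (i : ι) {e : E}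
    (he : ‖e‖ = 1) : ∃ b : OrthonormalBasis ι ℝ E, b i = e := by
  have horth : Orthonormal ℝ (({i} : Set ι).domRestrict fun _ => e) :=
    ⟨fun _ => he, fun j k hjk => (hjk (Subsingleton.elim j k)).elim⟩
  obtain ⟨b, hb⟩ := horth.exists_orthonormalBasis_extension_of_card_eq hι
  exact ⟨b, hb i rfl⟩

variable [MeasurableSpace E] [BorelSpace E]

theorem volume_le_prod_ediam_image_inner (b : OrthonormalBasis ι ℝ E) (A : Set E) :
    volume A ≤ ∏ i, ediam ((fun x => ⟪b i, x⟫) '' A) := by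
  let coords : E ≃ᵐ (ι → ℝ) := b.measurableEquiv.trans (MeasurableEquiv.toLp 2 (ι → ℝ)).symm
  have hcoords : MeasurePreserving coords volume volume :=
    b.measurePreserving_measurableEquiv.trans
      (EuclideanSpace.volume_preserving_symm_measurableEquiv_toLp ι)
  have himage : ∀ i, Function.eval i '' (coords '' A) = (fun x => ⟪b i, x⟫) '' A := fun i => by
    rw [image_image]
    exact image_congr fun x _ => b.repr_apply_apply x i
  calc volume A = volume (coords '' A) := by
        rw [← hcoords.measure_preimage_equiv, coords.preimage_image]
    _ ≤ ∏ i, ediam (Function.eval i '' (coords '' A)) := Real.volume_pi_le_prod_diam _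
    _ = ∏ i, ediam ((fun x => ⟪b i, x⟫) '' A) := by simp only [himage]

theorem volume_le_of_forall_norm_sub_sub_smul_le {n : ℕ} (hE : finrank ℝ E = n + 1) {A : Set E}
    {e : E} (he : ‖e‖ = 1) {δ D : ℝ} (hD : 0 ≤ D)
    (hA : ∀ x ∈ A, ∀ y ∈ A, ∃ σ : ℝ, |σ| ≤ δ ∧ ‖x - y - σ • e‖ ≤ D) :
    volume A ≤ ENNReal.ofReal ((δ + D) * D ^ n) := by
  obtain ⟨b, hb⟩ := exists_orthonormalBasis_apply_eq (ι := Fin (n + 1)) (by simpa) 0 he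
  have hediam : ∀ i c, |⟪b i, e⟫| * δ + D ≤ c →
      ediam ((fun x => ⟪b i, x⟫) '' A) ≤ ENNReal.ofReal c := by
    rintro i c hc
    refine ediam_le ?_
    rintro _ ⟨x, hx, rfl⟩ _ ⟨y, hy, rfl⟩
    obtain ⟨σ, hσ, hxy⟩ := hA x hx y hy
    have hinner : |⟪b i, x - y - σ • e⟫| ≤ D := by
      refine (abs_real_inner_le_norm _ _).trans ?_
      rwa [b.orthonormal.norm_eq_one, one_mul]
    rw [edist_dist]
    refine ENNReal.ofReal_le_ofReal (le_trans ?_ hc)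
    calc dist ⟪b i, x⟫ ⟪b i, y⟫ = |⟪b i, e⟫ * σ + ⟪b i, x - y - σ • e⟫| := by
          rw [Real.dist_eq, inner_sub_right, inner_sub_right, real_inner_smul_right]
          congr 1
          ring
      _ ≤ |⟪b i, e⟫ * σ| + |⟪b i, x - y - σ • e⟫| := abs_add_le _ _
      _ ≤ |⟪b i, e⟫| * δ + D := by rw [abs_mul]; gcongr
  have hzero : ediam ((fun x => ⟪b 0, x⟫) '' A) ≤ ENNReal.ofReal (δ + D) :=
    hediam 0 _ (by simp [hb, he])
  have hsucc : ∀ i : Fin n, ediam ((fun x => ⟪b i.succ, x⟫) '' A) ≤ ENNReal.ofReal D := fun i =>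
    hediam _ _ (by simp [← hb, b.orthonormal.inner_eq_zero (Fin.succ_ne_zero i)])
  calc volume A ≤ ∏ i, ediam ((fun x => ⟪b i, x⟫) '' A) := volume_le_prod_ediam_image_inner b A
    _ ≤ ENNReal.ofReal (δ + D) * ∏ _i : Fin n, ENNReal.ofReal D := by
        rw [Fin.prod_univ_succ]
        exact mul_le_mul' hzero (Finset.prod_le_prod' fun i _ => hsucc i)
    _ = ENNReal.ofReal ((δ + D) * D ^ n) := by
        rw [ENNReal.ofReal_mul' (pow_nonneg hD n), ENNReal.ofReal_pow hD, Finset.prod_const,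
          Finset.card_univ, Fintype.card_fin]

end ThinSets

section InnerNormals

variable {F : Type*} [NormedAddCommGroup F] [InnerProductSpace ℝ F] {Ω : Set F}
  {a b s s' δ D : ℝ} {y y' y₀ ν ν' ν₀ : F}

/-- `ν` is a unit inner normal of `Ω` at `y` of reach at least `a`: the ball of radius `a` which
touches `Ωᶜ` at `y` and has its centre on the ray from `y` along `ν` lies in `Ω`. -/
structure IsInnerNormal (Ω : Set F) (a : ℝ) (y ν : F) : Prop where
  norm_eq_one : ‖ν‖ = 1
  notMem : y ∉ Ω
  ball_subset : ball (y + a • ν) a ⊆ Ω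

theorem exists_isInnerNormal [FiniteDimensional ℝ F] (ho : IsOpen Ω) (hΩ : Ω ≠ univ) {x : F}
    (hx : x ∈ Ω) :
    ∃ y ∈ frontier Ω, ∃ ν, IsInnerNormal Ω (infDist x Ωᶜ) y ν ∧ x = y + infDist x Ωᶜ • ν := by
  obtain ⟨y, hy, hxy⟩ := exists_mem_frontier_infDist_compl_eq_dist hx hΩ
  have hpos : 0 < infDist x Ωᶜ := infDist_compl_pos ho hΩ hx
  rw [dist_eq_norm] at hxy
  have hx_eq : x = y + infDist x Ωᶜ • (infDist x Ωᶜ)⁻¹ • (x - y) := by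
    rw [smul_inv_smul₀ hpos.ne', add_sub_cancel]
  refine ⟨y, hy, (infDist x Ωᶜ)⁻¹ • (x - y), ⟨?_, ?_, ?_⟩, hx_eq⟩
  · rw [norm_smul, ← hxy, norm_inv, Real.norm_of_nonneg hpos.le, inv_mul_cancel₀ hpos.ne']
  · exact (ho.frontier_eq ▸ hy).2
  · rw [← hx_eq]
    exact ball_infDist_compl_subset

namespace IsInnerNormal

theorem mono (h : IsInnerNormal Ω b y ν) (hab : a ≤ b) : IsInnerNormal Ω a y ν := by
  refine ⟨h.norm_eq_one, h.notMem, (ball_subset_ball' ?_).trans h.ball_subset⟩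
  rw [dist_add_left, dist_eq_norm, ← sub_smul, norm_smul, h.norm_eq_one, mul_one,
    Real.norm_of_nonpos (by linarith)]
  linarith

theorem inner_sub_le_zero (hΩ : Convex ℝ Ω) (ha : 0 ≤ a) (h : IsInnerNormal Ω a y ν) {w : F}
    (hw : ball w a ⊆ Ω) : ⟪y - (y + a • ν), w - (y + a • ν)⟫ ≤ 0 := by
  refine inner_sub_le_zero_of_forall_dist_le (convex_setOf_ball_subset hΩ a) h.ball_subset
    (fun w hw => ?_) w hw
  have hdist : dist y (y + a • ν) = a := by
    rw [dist_self_add_right, norm_smul, h.norm_eq_one, mul_one, Real.norm_of_nonneg ha]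
  rw [hdist]
  by_contra! hlt
  exact h.notMem (hw hlt)

theorem dist_add_smul_le (hΩ : Convex ℝ Ω) (ha : 0 ≤ a) (h : IsInnerNormal Ω a y ν)
    (h' : IsInnerNormal Ω a y' ν') : dist (y + a • ν) (y' + a • ν') ≤ dist y y' :=
  dist_le_dist_of_inner_sub_le_zero (h.inner_sub_le_zero hΩ ha h'.ball_subset)
    (h'.inner_sub_le_zero hΩ ha h.ball_subset)

theorem norm_normal_sub_le (hΩ : Convex ℝ Ω) (ha : 0 < a) (h : IsInnerNormal Ω a y ν)
    (h' : IsInnerNormal Ω a y' ν') : ‖ν - ν'‖ ≤ 2 * dist y y' / a := by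
  rw [le_div_iff₀ ha]
  calc ‖ν - ν'‖ * a = ‖(y + a • ν - (y' + a • ν')) - (y - y')‖ := by
        rw [add_sub_add_comm, add_sub_cancel_left, ← smul_sub, norm_smul,
          Real.norm_of_nonneg ha.le, mul_comm]
    _ ≤ ‖y + a • ν - (y' + a • ν')‖ + ‖y - y'‖ := norm_sub_le _ _
    _ ≤ 2 * dist y y' := by
        rw [← dist_eq_norm, ← dist_eq_norm, two_mul]
        gcongr
        exact h.dist_add_smul_le hΩ ha.le h'

theorem norm_sub_sub_smul_le (hΩ : Convex ℝ Ω) (ha : 0 < a) (h : IsInnerNormal Ω a y ν)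
    (h' : IsInnerNormal Ω a y' ν') (h₀ : IsInnerNormal Ω a y₀ ν₀) (hyy' : dist y y' ≤ D)
    (hy : dist y y₀ ≤ D) (hy' : dist y' y₀ ≤ D) (hs : s ∈ Icc a (a + δ))
    (hs' : s' ∈ Icc a (a + δ)) :
    ‖y + s • ν - (y' + s' • ν') - (s - s') • ν₀‖ ≤ (1 + 4 * δ / a) * D := by
  have hδ : 0 ≤ δ := by linarith [hs.1, hs.2]
  have htilt : ∀ {z μ : F} {r : ℝ}, IsInnerNormal Ω a z μ → dist z y₀ ≤ D → r ∈ Icc a (a + δ) →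
      ‖(r - a) • (μ - ν₀)‖ ≤ δ * (2 * D / a) := fun hμ hz hr => by
    rw [norm_smul, Real.norm_of_nonneg (sub_nonneg.2 hr.1)]
    refine mul_le_mul (by linarith [hr.2]) ((hμ.norm_normal_sub_le hΩ ha h₀).trans ?_)
      (norm_nonneg _) hδ
    gcongr
  calc ‖y + s • ν - (y' + s' • ν') - (s - s') • ν₀‖
      = ‖(y + a • ν - (y' + a • ν')) + (s - a) • (ν - ν₀) - (s' - a) • (ν' - ν₀)‖ := by
        congr 1
        module
    _ ≤ ‖y + a • ν - (y' + a • ν')‖ + ‖(s - a) • (ν - ν₀)‖ + ‖(s' - a) • (ν' - ν₀)‖ :=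
        (norm_sub_le _ _).trans (by gcongr; exact norm_add_le _ _)
    _ ≤ D + δ * (2 * D / a) + δ * (2 * D / a) := by
        gcongr
        · rw [← dist_eq_norm]
          exact (h.dist_add_smul_le hΩ ha.le h').trans hyy'
        · exact htilt h hy hs
        · exact htilt h' hy' hs'
    _ = (1 + 4 * δ / a) * D := by ring

end IsInnerNormal

end InnerNormals

section BoundaryLayers

variable {E : Type*} [NormedAddCommGroup E] [InnerProductSpace ℝ E] [FiniteDimensional ℝ E]
  [MeasurableSpace E] [BorelSpace E] {n : ℕ} {Ω : Set E} {a δ : ℝ}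

theorem le_ofReal_mul_of_tendsto {ι : Type*} {l : Filter ι} [l.NeBot] {f : ι → ℝ} {c : ℝ}
    (hc : 0 < c) (hf : Tendsto f l (𝓝 c)) {v w : ℝ≥0∞}
    (h : ∀ᶠ i in l, v ≤ ENNReal.ofReal (f i) * w) : v ≤ ENNReal.ofReal c * w :=
  ge_of_tendsto (ENNReal.Tendsto.mul_const (ENNReal.tendsto_ofReal hf)
    (Or.inl (ENNReal.ofReal_pos.2 hc).ne')) h

theorem volume_le_of_forall_exists_isInnerNormal (hE : finrank ℝ E = n + 1) (hc : Convex ℝ Ω)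
    (ha : 0 < a) {D : ℝ} {t A : Set E}
    (ht : ∀ y ∈ t, ∀ y' ∈ t, dist y y' ≤ D)
    (hA : ∀ x ∈ A, ∃ y ∈ t, ∃ ν, ∃ s ∈ Icc a (a + δ), IsInnerNormal Ω s y ν ∧ x = y + s • ν) :
    volume A ≤ ENNReal.ofReal ((δ + (1 + 4 * δ / a) * D) * ((1 + 4 * δ / a) * D) ^ n) := by
  rcases A.eq_empty_or_nonempty with rfl | ⟨x₀, hx₀⟩
  · simp
  obtain ⟨y₀, hy₀, ν₀, s₀, hs₀, hν₀, -⟩ := hA x₀ hx₀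
  have hδ : 0 ≤ δ := by linarith [hs₀.1, hs₀.2]
  have hD : 0 ≤ D := dist_nonneg.trans (ht y₀ hy₀ y₀ hy₀)
  refine volume_le_of_forall_norm_sub_sub_smul_le hE hν₀.norm_eq_one (by positivity)
    fun x hx x' hx' => ?_
  obtain ⟨y, hy, ν, s, hs, hν, rfl⟩ := hA x hx
  obtain ⟨y', hy', ν', s', hs', hν', rfl⟩ := hA x' hx'
  refine ⟨s - s', abs_sub_le_iff.2 ⟨by linarith [hs.2, hs'.1], by linarith [hs.1, hs'.2]⟩, ?_⟩
  exact (hν.mono hs.1).norm_sub_sub_smul_le hc ha (hν'.mono hs'.1) (hν₀.mono hs₀.1)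
    (ht y hy y' hy') (ht y hy y₀ hy₀) (ht y' hy' y₀ hy₀) hs hs'

theorem volume_band_le_of_pos (hE : finrank ℝ E = n + 1) (hc : Convex ℝ Ω) (ho : IsOpen Ω)
    (ha : 0 < a) (hδ : 0 < δ) {ρ : ℝ} (hρ : 0 < ρ) :
    volume {x | infDist x Ωᶜ ∈ Icc a (a + δ)} ≤
      ENNReal.ofReal ((δ + (1 + 4 * δ / a) * ρ) * (1 + 4 * δ / a) ^ n) * μH[n] (frontier Ω) := by
  rcases eq_or_ne Ω univ with rfl | hΩ
  · simp [ha.not_ge]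
  set c := 1 + 4 * δ / a
  have : 0 < c := by positivity
  have hmem : ∀ x ∈ {x | infDist x Ωᶜ ∈ Icc a (a + δ)}, x ∈ Ω := fun x hx => by
    by_contra hxΩ
    exact (ha.trans_le hx.1).ne' (infDist_zero_of_mem hxΩ)
  choose! y hy ν hν hx_eq using fun x hx => exists_isInnerNormal ho hΩ (hmem x hx)
  refine measure_le_mul_hausdorffMeasure_of_mapsTo (p := y) (ε := ENNReal.ofReal ρ) hy
    (ENNReal.ofReal_pos.2 (by positivity)).ne' ENNReal.ofReal_ne_top
    (ENNReal.ofReal_pos.2 hρ) fun t ht => ?_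
  have ht_top : ediam t ≠ ∞ := (ht.trans_lt ENNReal.ofReal_lt_top).ne
  have hdiam : diam t ≤ ρ := ENNReal.toReal_le_of_le_ofReal hρ.le ht
  calc volume ({x | infDist x Ωᶜ ∈ Icc a (a + δ)} ∩ y ⁻¹' t)
      ≤ ENNReal.ofReal ((δ + c * diam t) * (c * diam t) ^ n) :=
        volume_le_of_forall_exists_isInnerNormal hE hc ha
          (fun _ hz _ hz' => dist_le_diam_of_mem' ht_top hz hz')
          fun x hx => ⟨y x, hx.2, ν x, _, hx.1, hν x hx.1, hx_eq x hx.1⟩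
    _ ≤ ENNReal.ofReal ((δ + c * ρ) * c ^ n * diam t ^ n) := by
        rw [mul_pow, ← mul_assoc]
        have := diam_nonneg (s := t)
        gcongr
    _ = ENNReal.ofReal ((δ + c * ρ) * c ^ n) * ediam t ^ (n : ℝ) := by
        rw [ENNReal.ofReal_mul (by positivity), ENNReal.ofReal_pow diam_nonneg, diam,
          ENNReal.ofReal_toReal ht_top, ENNReal.rpow_natCast]

theorem volume_band_le (hE : finrank ℝ E = n + 1) (hc : Convex ℝ Ω) (ho : IsOpen Ω)
    (ha : 0 < a) (hδ : 0 < δ) :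
    volume {x | infDist x Ωᶜ ∈ Icc a (a + δ)} ≤
      ENNReal.ofReal (δ * (1 + 4 * δ / a) ^ n) * μH[n] (frontier Ω) := by
  have hlim : Tendsto (fun ρ : ℝ => (δ + (1 + 4 * δ / a) * ρ) * (1 + 4 * δ / a) ^ n) (𝓝[>] 0)
      (𝓝 (δ * (1 + 4 * δ / a) ^ n)) :=
    tendsto_nhdsWithin_of_tendsto_nhds (Continuous.tendsto' (by fun_prop) _ _ (by simp))
  refine le_ofReal_mul_of_tendsto (by positivity) hlim ?_
  filter_upwards [self_mem_nhdsWithin] with ρ hρ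
  exact volume_band_le_of_pos hE hc ho ha hδ hρ

theorem sdiff_innerParallelSet_subset_iUnion_band {X : Type*} [PseudoMetricSpace X] {U : Set X}
    (hU : IsOpen U) {b q : ℝ} (hb : 0 < b) (hq₀ : 0 < q) (hq₁ : q < 1) :
    U \ innerParallelSet U b ⊆
      ⋃ k : ℕ, {x | infDist x Uᶜ ∈
        Icc (b * q ^ (k + 1)) (b * q ^ (k + 1) + b * q ^ k * (1 - q))} := by
  rcases eq_or_ne U univ with rfl | hne
  · simp [innerParallelSet_univ]
  rintro x ⟨hxU, hxb⟩
  have hpos : 0 < infDist x Uᶜ := infDist_compl_pos hU hne hxU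
  have hle : infDist x Uᶜ ≤ b := by
    rwa [mem_innerParallelSet_iff_lt_infDist hne, not_lt] at hxb
  obtain ⟨k, hk, hk'⟩ :=
    exists_nat_pow_near_of_lt_one (div_pos hpos hb) ((div_le_one hb).2 hle) hq₀ hq₁
  rw [lt_div_iff₀' hb] at hk
  rw [div_le_iff₀' hb] at hk'
  exact mem_iUnion.2 ⟨k, hk.le, hk'.trans_eq (by ring)⟩

theorem volume_sdiff_innerParallelSet_le_of_ratio (hE : finrank ℝ E = n + 1) (hc : Convex ℝ Ω)
    (ho : IsOpen Ω) {b q : ℝ} (hb : 0 < b) (hq₀ : 0 < q) (hq₁ : q < 1) :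
    volume (Ω \ innerParallelSet Ω b) ≤
      ENNReal.ofReal (b * (1 + 4 * (1 - q) / q) ^ n) * μH[n] (frontier Ω) := by
  have hq : 0 < 1 - q := sub_pos.2 hq₁
  set C := b * (1 + 4 * (1 - q) / q) ^ n
  have hband : ∀ k : ℕ,
      volume {x | infDist x Ωᶜ ∈
        Icc (b * q ^ (k + 1)) (b * q ^ (k + 1) + b * q ^ k * (1 - q))} ≤
      ENNReal.ofReal (C * ((1 - q) * q ^ k)) * μH[n] (frontier Ω) := fun k => by
    have hratio : 4 * (b * q ^ k * (1 - q)) / (b * q ^ (k + 1)) = 4 * (1 - q) / q := by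
      field_simp
      ring
    refine (volume_band_le hE hc ho (by positivity) (by positivity)).trans_eq ?_
    rw [hratio]
    congr 2
    ring
  have hsum : HasSum (fun k : ℕ => C * ((1 - q) * q ^ k)) C := by
    simpa [hq.ne'] using ((hasSum_geometric_of_lt_one hq₀.le hq₁).mul_left (1 - q)).mul_left C
  calc volume (Ω \ innerParallelSet Ω b)
      ≤ ∑' k, ENNReal.ofReal (C * ((1 - q) * q ^ k)) * μH[n] (frontier Ω) :=
        (measure_mono (sdiff_innerParallelSet_subset_iUnion_band ho hb hq₀ hq₁)).trans
          ((measure_iUnion_le _).trans (ENNReal.tsum_le_tsum hband))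
    _ = ENNReal.ofReal C * μH[n] (frontier Ω) := by
        rw [ENNReal.tsum_mul_right, ← ENNReal.ofReal_tsum_of_nonneg _ hsum.summable, hsum.tsum_eq]
        intro k
        positivity

theorem volume_sdiff_innerParallelSet_le (hE : finrank ℝ E = n + 1) (hc : Convex ℝ Ω)
    (ho : IsOpen Ω) {b : ℝ} (hb : 0 < b) :
    volume (Ω \ innerParallelSet Ω b) ≤ ENNReal.ofReal b * μH[n] (frontier Ω) := by
  have hlim : Tendsto (fun q : ℝ => b * (1 + 4 * (1 - q) / q) ^ n) (𝓝[<] 1) (𝓝 b) := by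
    have hcont : ContinuousAt (fun q : ℝ => b * (1 + 4 * (1 - q) / q) ^ n) 1 := by
      fun_prop (disch := norm_num)
    simpa using tendsto_nhdsWithin_of_tendsto_nhds (s := Iio 1) hcont.tendsto
  refine le_ofReal_mul_of_tendsto hb hlim ?_
  filter_upwards [Ioo_mem_nhdsLT zero_lt_one] with q hq
  exact volume_sdiff_innerParallelSet_le_of_ratio hE hc ho hb hq.1 hq.2

end BoundaryLayers

section Inradius

variable {E : Type*} [NormedAddCommGroup E] [InnerProductSpace ℝ E] [FiniteDimensional ℝ E]
  [MeasurableSpace E] [BorelSpace E] {Ω : Set E}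

theorem volume_le_half_inradius_mul_add {n : ℕ} (hE : finrank ℝ E = n + 1) (hc : Convex ℝ Ω)
    (ho : IsOpen Ω) (hb : Bornology.IsBounded Ω) (hne : Ω.Nonempty) :
    volume Ω ≤ ENNReal.ofReal (inradius Ω / 2) *
      (μH[n] (frontier Ω) + μH[n] (frontier (innerParallelSet Ω (inradius Ω / 2)))) := by
  have : Nontrivial E := nontrivial_of_finrank_eq_succ hE
  have hτ : 0 < inradius Ω / 2 := half_pos (inradius_pos hb ho hne)
  set τ := inradius Ω / 2 with hτ_def
  have hempty : innerParallelSet (innerParallelSet Ω τ) τ = ∅ := by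
    refine subset_empty_iff.1 ((innerParallelSet_innerParallelSet_subset hτ.le hτ.le).trans ?_)
    rw [hτ_def, add_halves, innerParallelSet_inradius hb]
  calc volume Ω
      ≤ volume (Ω \ innerParallelSet Ω τ) + volume (innerParallelSet Ω τ) :=
        (measure_mono (subset_sdiff_union _ _)).trans (measure_union_le _ _)
    _ = volume (Ω \ innerParallelSet Ω τ) +
          volume (innerParallelSet Ω τ \ innerParallelSet (innerParallelSet Ω τ) τ) := by
        rw [hempty, sdiff_empty]
    _ ≤ _ := by
        rw [mul_add]
        gcongr
        · exact volume_sdiff_innerParallelSet_le hE hc ho hτ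
        · exact volume_sdiff_innerParallelSet_le hE (convex_innerParallelSet hc)
            isOpen_innerParallelSet hτ

theorem volume_lt_inradius_mul_hausdorffMeasure_frontier (hE : 2 ≤ finrank ℝ E)
    (hc : Convex ℝ Ω) (ho : IsOpen Ω) (hb : Bornology.IsBounded Ω) (hne : Ω.Nonempty) :
    volume Ω <
      ENNReal.ofReal (inradius Ω) * μH[(finrank ℝ E : ℝ) - 1] (frontier Ω) := by
  obtain ⟨n, hn⟩ := Nat.exists_eq_add_of_le' (one_le_two.trans hE)
  have hn_pos : (0 : ℝ) < n := by exact_mod_cast (show 0 < n by lia)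
  have : Nontrivial E := nontrivial_of_finrank_eq_succ hn
  rw [show (finrank ℝ E : ℝ) - 1 = n by simp [hn]]
  have hr : 0 < inradius Ω := inradius_pos hb ho hne
  rcases eq_or_ne (μH[n] (frontier Ω)) ∞ with htop | hfin
  · rw [htop, ENNReal.mul_top (ENNReal.ofReal_pos.2 hr).ne']
    exact hb.measure_lt_top
  have hle := volume_le_half_inradius_mul_add hn hc ho hb hne
  have h0 : μH[n] (frontier Ω) ≠ 0 := by
    intro h0
    have hinner : μH[n] (frontier (innerParallelSet Ω (inradius Ω / 2))) = 0 :=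
      le_antisymm (h0 ▸ hausdorffMeasure_frontier_mono (convex_innerParallelSet hc)
        isOpen_innerParallelSet hb (innerParallelSet_subset (half_pos hr).le) hn_pos.le) bot_le
    rw [h0, hinner, add_zero, mul_zero] at hle
    exact (ho.measure_pos volume hne).not_ge hle
  calc volume Ω ≤ _ := hle
    _ < ENNReal.ofReal (inradius Ω / 2) * (μH[n] (frontier Ω) + μH[n] (frontier Ω)) := by
        refine ENNReal.mul_lt_mul_right (ENNReal.ofReal_pos.2 (half_pos hr)).ne'
          ENNReal.ofReal_ne_top (ENNReal.add_lt_add_left hfin ?_)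
        exact hausdorffMeasure_frontier_innerParallelSet_lt hc hb (half_pos hr) hn_pos h0 hfin
    _ = ENNReal.ofReal (inradius Ω) * μH[n] (frontier Ω) := by
        rw [← two_mul, ← mul_assoc, ← ENNReal.ofReal_ofNat 2,
          ← ENNReal.ofReal_mul (half_pos hr).le, div_mul_cancel₀ _ two_ne_zero]

theorem inner_ball_of_convex_subset_general (hE : 2 ≤ finrank ℝ E) {D : Set E}
    (hD : Bornology.IsBounded D) {S : ℝ}
    (hS : μH[(finrank ℝ E : ℝ) - 1] (frontier D) = ENNReal.ofReal S) (hΩD : Ω ⊆ D)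
    (ho : IsOpen Ω) (hc : Convex ℝ Ω) {m : ℝ} (hm : 0 < m) (hvol : volume Ω = ENNReal.ofReal m) :
    (∃ x, ball x (m / S) ⊆ Ω) ∧
    m / S ≤ (volume Ω).toReal / (μH[(finrank ℝ E : ℝ) - 1] (frontier Ω)).toReal ∧
    (volume Ω).toReal / (μH[(finrank ℝ E : ℝ) - 1] (frontier Ω)).toReal < inradius Ω := by
  have hne : Ω.Nonempty := nonempty_of_measure_ne_zero (μ := volume) (by simp [hvol, hm])
  have hd : (0 : ℝ) ≤ finrank ℝ E - 1 := by
    rw [sub_nonneg]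
    exact_mod_cast one_le_two.trans hE
  set H := μH[(finrank ℝ E : ℝ) - 1] (frontier Ω)
  have hlt : volume Ω < ENNReal.ofReal (inradius Ω) * H :=
    volume_lt_inradius_mul_hausdorffMeasure_frontier hE hc ho (hD.subset hΩD) hne
  have hHS : H ≤ ENNReal.ofReal S := hS ▸ hausdorffMeasure_frontier_mono hc ho hD hΩD hd
  have hH_top : H ≠ ∞ := (hHS.trans_lt ENNReal.ofReal_lt_top).ne
  have hH_pos : 0 < H := pos_iff_ne_zero.2 (right_ne_zero_of_mul (bot_le.trans_lt hlt).ne')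
  have hH_real : 0 < H.toReal := ENNReal.toReal_pos hH_pos.ne' hH_top
  have hS_pos : 0 < S := ENNReal.ofReal_pos.1 (hH_pos.trans_le hHS)
  have hratio : m / S ≤ (volume Ω).toReal / H.toReal := by
    rw [hvol, ENNReal.toReal_ofReal hm.le]
    gcongr
    exact ENNReal.toReal_le_of_le_ofReal hS_pos.le hHS
  have hinradius : (volume Ω).toReal / H.toReal < inradius Ω := by
    rw [div_lt_iff₀ hH_real]
    simpa [inradius_nonneg] using
      ENNReal.toReal_strict_mono (ENNReal.mul_ne_top ENNReal.ofReal_ne_top hH_top) hlt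
  exact ⟨exists_ball_subset_of_lt_inradius (hratio.trans_lt hinradius), hratio, hinradius⟩

end Inradius

/-- An open convex subset `Ω` of a compact convex set `D ⊆ ℝ^N` (`N ≥ 2`) with
`ℋ^{N-1}(∂D) = S` and `|Ω| = m > 0` contains an open ball of radius `m/S`; indeed its
inradius is strictly greater than `|Ω| / ℋ^{N-1}(∂Ω) ≥ m/S`. -/
theorem inner_ball_of_convex_subset {N : ℕ} (hN : 2 ≤ N)
    (D : Set (EuclideanSpace ℝ (Fin N))) (hD : IsCompact D) (hDc : Convex ℝ D)
    (S : ℝ) (hS : μH[(N : ℝ) - 1] (frontier D) = ENNReal.ofReal S)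
    (Ω : Set (EuclideanSpace ℝ (Fin N))) (hΩD : Ω ⊆ D)
    (ho : IsOpen Ω) (hc : Convex ℝ Ω)
    (m : ℝ) (hm : 0 < m) (hvol : volume Ω = ENNReal.ofReal m) :
    (∃ x, Metric.ball x (m / S) ⊆ Ω) ∧
    m / S ≤ (volume Ω).toReal / (μH[(N : ℝ) - 1] (frontier Ω)).toReal ∧
    (volume Ω).toReal / (μH[(N : ℝ) - 1] (frontier Ω)).toReal <
      sSup {r : ℝ | 0 < r ∧ ∃ x, Metric.ball x r ⊆ Ω} := by
  simpa only [finrank_euclideanSpace_fin, inradius] using inner_ball_of_convex_subset_general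
    (by simpa using hN) hD.isBounded (by simpa using hS) hΩD ho hc hm hvol
end
end

section
/- Let D ⊆ ℝ^N (N ≥ 2) be compact, m > 0 with C_m(D) nonempty, and let (a_ij) be a constant symmetric positive definite N×N real matrix. For Ω ∈ C_m(D) and k ≥ 1, define λ_k(Ω) = inf over all k-dimensional linear subspaces V of C_c^∞(Ω) of sup over nonzero u ∈ V of ( ∫_Ω Σ_{i,j} a_ij ∂u/∂x_i ∂u/∂x_j dx ) / ( ∫_Ω u² dx ). Then for every k ≥ 1 the functional λ_k : C_m(D) → ℝ is bounded (there are constants 0 < c ≤ C < ∞ with c ≤ λ_k(Ω) ≤ C for all Ω ∈ C_m(D)) and continuous with respect to uniform convergence: if Ω_n → Ω uniformly in C_m(D), then λ_k(Ω_n) → λ_k(Ω). -/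
open MeasureTheory Metric Filter Topology

noncomputable section

/-- Uniform (Hausdorff) convergence of a sequence of sets. -/
def UnifConvTo {N : ℕ} (Ω : ℕ → Set (EuclideanSpace ℝ (Fin N)))
    (L : Set (EuclideanSpace ℝ (Fin N))) : Prop :=
  ∀ ε > (0 : ℝ), ∀ᶠ n in Filter.atTop,
    Ω n ⊆ Metric.thickening ε L ∧ L ⊆ Metric.thickening ε (Ω n)

/-- `Ω` belongs to the class `C_m(D)`: open convex subset of `D` of volume `m`. -/
def InCm {N : ℕ} (D : Set (EuclideanSpace ℝ (Fin N))) (m : ℝ)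
    (Ω : Set (EuclideanSpace ℝ (Fin N))) : Prop :=
  Ω ⊆ D ∧ IsOpen Ω ∧ Convex ℝ Ω ∧ volume Ω = ENNReal.ofReal m

/-- The Rayleigh quotient on `Ω` of the constant-coefficient operator `-∂_i(a_ij ∂_j ·)`. -/
def rayleighQuot {N : ℕ} (A : Matrix (Fin N) (Fin N) ℝ)
    (Ω : Set (EuclideanSpace ℝ (Fin N))) (u : EuclideanSpace ℝ (Fin N) → ℝ) : ℝ :=
  (∫ x in Ω, ∑ i, ∑ j, A i j *
      fderiv ℝ u x (EuclideanSpace.single i (1 : ℝ)) *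
      fderiv ℝ u x (EuclideanSpace.single j (1 : ℝ))) /
  (∫ x in Ω, u x ^ 2)

/-- The `k`-th Dirichlet eigenvalue of `-∂_i(a_ij ∂_j ·)` on `Ω`, via Courant–Fischer
min-max over `k`-dimensional subspaces of test functions. -/
def lamk {N : ℕ} (A : Matrix (Fin N) (Fin N) ℝ)
    (Ω : Set (EuclideanSpace ℝ (Fin N))) (k : ℕ) : ℝ :=
  sInf {μ : ℝ | ∃ V : Submodule ℝ (EuclideanSpace ℝ (Fin N) → ℝ),
    Module.finrank ℝ V = k ∧
    (∀ u ∈ V, ContDiff ℝ (⊤ : ℕ∞) u ∧ HasCompactSupport u ∧ tsupport u ⊆ Ω) ∧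
    μ = sSup {q : ℝ | ∃ u ∈ V, u ≠ 0 ∧ q = rayleighQuot A Ω u}}

/-!
The min-max value is monotone under inclusion and is multiplied by `t⁻²` when the domain is dilated
by `t`. If open convex sets `Ω n` converge uniformly to `L` and a ball `B(x, r)` lies in `L`, then a
contraction about `x` of ratio `t < 1` maps `L` into `Ω n` and `Ω n` into `L` for large `n`, since a
convex set whose `ε`-thickening contains a ball contains the concentric ball of radius smaller
by `ε`. Hence `t² λ_k(Ω n) ≤ λ_k(L)` and `t² λ_k(L) ≤ λ_k(Ω n)`, and `t` may be taken close to `1`.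

Blaschke's selection theorem yields a radius `r` such that every convex subset of `D` of volume at
least `m` contains a ball of radius `r`, so `λ_k` is bounded by its value on such a ball; Poincaré's
inequality on the bounded set `D`, obtained by integrating by parts against a linear function, gives
the lower bound.
-/

section RealLimits

theorem tendsto_of_forall_eventually_mul_le {ι : Type*} {l : Filter ι} {f : ι → ℝ} {c : ℝ}
    (h : ∀ t ∈ Set.Ioo (0 : ℝ) 1, ∀ᶠ i in l, t * c ≤ f i ∧ t * f i ≤ c) :
    Tendsto f l (𝓝 c) := by
  have mem_Ioo : ∀ᶠ t : ℝ in 𝓝[<] 1, t ∈ Set.Ioo (0 : ℝ) 1 := Ioo_mem_nhdsLT one_pos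
  have mul_tendsto : Tendsto (fun t : ℝ => t * c) (𝓝[<] 1) (𝓝 c) :=
    (Continuous.tendsto' (by fun_prop) 1 c (one_mul c)).mono_left nhdsWithin_le_nhds
  have div_tendsto : Tendsto (fun t : ℝ => c / t) (𝓝[<] 1) (𝓝 c) := by
    have : ContinuousAt (fun t : ℝ => c / t) 1 := by fun_prop (disch := norm_num)
    simpa only [div_one] using this.tendsto.mono_left nhdsWithin_le_nhds
  refine tendsto_order.2 ⟨fun a ha => ?_, fun b hb => ?_⟩
  · obtain ⟨t, hat, ht⟩ := ((mul_tendsto.eventually_const_lt ha).and mem_Ioo).exists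
    filter_upwards [h t ht] with i hi using hat.trans_le hi.1
  · obtain ⟨t, htb, ht⟩ := ((div_tendsto.eventually_lt_const hb).and mem_Ioo).exists
    filter_upwards [h t ht] with i hi
    exact ((le_div_iff₀' ht.1).2 hi.2).trans_lt htb

end RealLimits

section ConvexSets

variable {E : Type*} [NormedAddCommGroup E] [NormedSpace ℝ E]

theorem mem_of_ball_subset_thickening {Ω : Set E} (hΩ : IsOpen Ω) (hΩc : Convex ℝ Ω) {z : E}
    {ε ρ : ℝ} (hρ : 0 < ρ) (hερ : ε < ρ) (h : ball z ρ ⊆ thickening ε Ω) : z ∈ Ω := by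
  by_contra hz
  -- A functional `f` separating `z` from `Ω` gains almost `ρ * ‖f‖` inside the ball, whereas it
  -- gains at most `ε * ‖f‖` when passing from `Ω` to its thickening.
  obtain ⟨f, hf⟩ := geometric_hahn_banach_open_point hΩc hΩ hz
  obtain ⟨w₀, hw₀, -⟩ := mem_thickening_iff.1 (h (mem_ball_self hρ))
  have hf_pos : 0 < ‖f‖ := norm_pos_iff.2 fun h0 => by simpa [h0] using hf w₀ hw₀
  obtain ⟨e, he, hfe⟩ : ∃ e : E, ‖e‖ < 1 ∧ ε / ρ * ‖f‖ < f e := by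
    obtain ⟨e, he, hfe⟩ := f.exists_lt_apply_of_lt_opNorm
      (mul_lt_of_lt_one_left hf_pos ((div_lt_one hρ).2 hερ))
    rcases abs_choice (f e) with hs | hs
    · exact ⟨e, he, by rwa [Real.norm_eq_abs, hs] at hfe⟩
    · exact ⟨-e, by rwa [norm_neg], by rwa [Real.norm_eq_abs, hs, ← map_neg] at hfe⟩
  have hze : z + ρ • e ∈ ball z ρ := by
    rw [mem_ball, dist_self_add_left, norm_smul, Real.norm_of_nonneg hρ.le]
    exact mul_lt_of_lt_one_right hρ he
  obtain ⟨w, hw, hdist⟩ := mem_thickening_iff.1 (h hze)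
  have hgain : f (z + ρ • e) - f w ≤ ‖f‖ * ε := by
    rw [← map_sub]
    refine (le_abs_self _).trans ((f.le_opNorm _).trans ?_)
    gcongr
    exact (dist_eq_norm (z + ρ • e) w ▸ hdist).le
  have hfe' : ε * ‖f‖ < ρ * f e := by
    rwa [div_mul_eq_mul_div, div_lt_iff₀' hρ] at hfe
  rw [map_add, map_smul, smul_eq_mul] at hgain
  linarith [hf w hw]

theorem ball_sub_subset_of_subset_thickening {Ω : Set E} (hΩ : IsOpen Ω) (hΩc : Convex ℝ Ω)
    {x : E} {ε ρ : ℝ} (hε : 0 < ε) (h : ball x ρ ⊆ thickening ε Ω) : ball x (ρ - ε) ⊆ Ω := by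
  intro z hz
  have hεz : ε < ρ - dist z x := by linarith [mem_ball.1 hz]
  exact mem_of_ball_subset_thickening hΩ hΩc (hε.trans hεz) hεz
    ((ball_subset_ball' (by linarith)).trans h)

theorem ball_combo_subset_of_convex {K : Set E} (hK : Convex ℝ K) {x y : E} {r t : ℝ}
    (hxr : ball x r ⊆ K) (hy : y ∈ K) (ht₀ : 0 ≤ t) (ht₁ : t < 1) :
    ball ((1 - t) • x + t • y) ((1 - t) * r) ⊆ K := by
  intro z hz
  have hs : 0 < 1 - t := sub_pos.2 ht₁
  have hmem : x + (1 - t)⁻¹ • (z - ((1 - t) • x + t • y)) ∈ K := by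
    apply hxr
    rw [mem_ball, dist_self_add_left, norm_smul, norm_inv, Real.norm_of_nonneg hs.le,
      inv_mul_lt_iff₀ hs]
    rwa [mem_ball, dist_eq_norm] at hz
  have hz_combo := hK hmem hy hs.le ht₀ (sub_add_cancel 1 t)
  rwa [smul_add, smul_inv_smul₀ hs.ne', add_right_comm, add_sub_cancel] at hz_combo

theorem mapsTo_contraction_of_subset_thickening {K Ω : Set E} (hK : Convex ℝ K) (hΩ : IsOpen Ω)
    (hΩc : Convex ℝ Ω) {x : E} {r ε t : ℝ} (hr : 0 < r) (hxr : ball x r ⊆ K) (ht₀ : 0 ≤ t)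
    (ht₁ : t < 1) (hε : ε < (1 - t) * r) (h : K ⊆ thickening ε Ω) :
    Set.MapsTo (fun y => (1 - t) • x + t • y) K Ω := fun _y hy =>
  mem_of_ball_subset_thickening hΩ hΩc (mul_pos (sub_pos.2 ht₁) hr) hε
    ((ball_combo_subset_of_convex hK hxr hy ht₀ ht₁).trans h)

theorem convex_of_forall_exists_thickening {L : Set E} (hL : IsClosed L)
    (h : ∀ ε > 0, ∃ Ω : Set E, Convex ℝ Ω ∧ Ω ⊆ thickening ε L ∧ L ⊆ thickening ε Ω) :
    Convex ℝ L := by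
  intro x hx y hy a b ha hb hab
  rw [← hL.closure_eq, closure_eq_iInter_thickening]
  refine Set.mem_iInter₂.2 fun ε hε => ?_
  obtain ⟨Ω, hΩ, hΩL, hLΩ⟩ := h (ε / 2) (half_pos hε)
  have hmem := hΩ.thickening (ε / 2) (hLΩ hx) (hLΩ hy) ha hb hab
  simpa only [add_halves] using
    thickening_thickening_subset (ε / 2) (ε / 2) L (thickening_subset_of_subset (ε / 2) hΩL hmem)

end ConvexSets

section Inradius

theorem exists_subseq_hausdorff_limit {X : Type*} [MetricSpace X] {D : Set X} (hD : IsCompact D)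
    {Ω : ℕ → Set X} (hΩD : ∀ n, Ω n ⊆ D) (hΩ : ∀ n, (Ω n).Nonempty) :
    ∃ (L : Set X) (φ : ℕ → ℕ), IsCompact L ∧ StrictMono φ ∧
      ∀ ε > 0, ∀ᶠ n in atTop, Ω (φ n) ⊆ thickening ε L ∧ L ⊆ thickening ε (Ω (φ n)) := by
  have hcl (n : ℕ) : closure (Ω n) ⊆ D := closure_minimal (hΩD n) hD.isClosed
  let K (n : ℕ) : TopologicalSpace.NonemptyCompacts X :=
    ⟨⟨closure (Ω n), hD.of_isClosed_subset isClosed_closure (hcl n)⟩, (hΩ n).closure⟩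
  obtain ⟨L, -, φ, hφ, hlim⟩ :=
    (TopologicalSpace.NonemptyCompacts.isCompact_subsets_of_isCompact hD).tendsto_subseq
      (x := K) hcl
  refine ⟨L, φ, L.isCompact, hφ, fun ε hε => ?_⟩
  filter_upwards [Metric.tendsto_nhds.1 hlim ε hε] with n hn
  have hdist : hausdorffDist (closure (Ω (φ n))) (L : Set X) < ε := hn
  have hfin : hausdorffEDist (closure (Ω (φ n))) (L : Set X) ≠ ⊤ :=
    hausdorffEDist_ne_top_of_nonempty_of_bounded (K (φ n)).nonempty L.nonempty
      (K (φ n)).isCompact.isBounded L.isCompact.isBounded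
  refine ⟨fun x hx => mem_thickening_iff.2 ?_, fun x hx => ?_⟩
  · exact exists_dist_lt_of_hausdorffDist_lt (subset_closure hx) hdist hfin
  · obtain ⟨y, hy, hxy⟩ := exists_dist_lt_of_hausdorffDist_lt' hx hdist hfin
    rw [← thickening_closure]
    exact mem_thickening_iff.2 ⟨y, hy, dist_comm x y ▸ hxy⟩

theorem le_measure_of_forall_exists_subset_thickening {X : Type*} [MetricSpace X]
    [ProperSpace X] [MeasurableSpace X] [OpensMeasurableSpace X] {μ : Measure X}
    [IsFiniteMeasureOnCompacts μ] {L : Set X} (hL : IsCompact L) {m : ENNReal}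
    (h : ∀ ε > 0, ∃ S : Set X, S ⊆ thickening ε L ∧ m ≤ μ S) : m ≤ μ L := by
  refine ge_of_tendsto ((tendsto_measure_cthickening_of_isCompact hL).mono_left
    (nhdsWithin_le_nhds (s := Set.Ioi 0))) ?_
  filter_upwards [self_mem_nhdsWithin] with ε hε
  obtain ⟨S, hSL, hS⟩ := h ε hε
  exact hS.trans (measure_mono (hSL.trans (thickening_subset_cthickening ε L)))

variable {E : Type*} [NormedAddCommGroup E] [NormedSpace ℝ E] [FiniteDimensional ℝ E]
  [MeasurableSpace E] [BorelSpace E]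

theorem interior_nonempty_of_convex_of_measure_ne_zero {μ : Measure E} [μ.IsAddHaarMeasure]
    {K : Set E} (hK : Convex ℝ K) (hμ : μ K ≠ 0) : (interior K).Nonempty := by
  by_contra! h
  exact hμ (measure_mono_null (by rw [frontier, h, Set.sdiff_empty]; exact subset_closure)
    (hK.addHaar_frontier μ))

theorem exists_forall_ball_subset_of_le_measure (μ : Measure E) [μ.IsAddHaarMeasure] {D : Set E}
    (hD : Bornology.IsBounded D) {m : ENNReal} (hm : m ≠ 0) :
    ∃ r > 0, ∀ Ω ⊆ D, IsOpen Ω → Convex ℝ Ω → m ≤ μ Ω → ∃ x, ball x r ⊆ Ω := by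
  have : ProperSpace E := FiniteDimensional.proper_real E
  by_contra! H
  choose Ω hΩD hΩo hΩc hΩm hno using fun n : ℕ => H (1 / ((n : ℝ) + 1)) (by positivity)
  have hΩne (n : ℕ) : (Ω n).Nonempty :=
    nonempty_of_measure_ne_zero ((pos_iff_ne_zero.2 hm).trans_le (hΩm n)).ne'
  obtain ⟨L, φ, hL, hφ, hlim⟩ := exists_subseq_hausdorff_limit hD.isCompact_closure
    (fun n => (hΩD n).trans subset_closure) hΩne
  have hLc : Convex ℝ L := convex_of_forall_exists_thickening hL.isClosed fun ε hε =>
    let ⟨n, hn⟩ := (hlim ε hε).exists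
    ⟨Ω (φ n), hΩc _, hn⟩
  have hLm : m ≤ μ L := le_measure_of_forall_exists_subset_thickening hL fun ε hε =>
    let ⟨n, hn⟩ := (hlim ε hε).exists
    ⟨Ω (φ n), hn.1, hΩm _⟩
  obtain ⟨x, hx⟩ := interior_nonempty_of_convex_of_measure_ne_zero hLc
    ((pos_iff_ne_zero.2 hm).trans_le hLm).ne'
  obtain ⟨ρ, hρ, hball⟩ := Metric.mem_nhds_iff.1 (mem_interior_iff_mem_nhds.1 hx)
  have hsmall : ∀ᶠ n in atTop, 1 / ((φ n : ℝ) + 1) < ρ / 2 :=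
    (tendsto_one_div_add_atTop_nhds_zero_nat.comp hφ.tendsto_atTop).eventually_lt_const
      (half_pos hρ)
  obtain ⟨n, hn, hn_small⟩ := ((hlim (ρ / 2) (half_pos hρ)).and hsmall).exists
  refine hno (φ n) x ((ball_subset_ball ?_).trans
    (ball_sub_subset_of_subset_thickening (hΩo _) (hΩc _) (half_pos hρ) (hball.trans hn.2)))
  linarith

end Inradius

section CourantFischer

theorem exists_bilinForm_self_le_mul_inner {V : Type*} [NormedAddCommGroup V]
    [InnerProductSpace ℝ V] [FiniteDimensional ℝ V] (a : LinearMap.BilinForm ℝ V) :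
    ∃ C > 0, ∀ u, a u u ≤ C * inner ℝ u u := by
  let a' : V →L[ℝ] V →L[ℝ] ℝ := LinearMap.toContinuousBilinearMap a
  refine ⟨‖a'‖ + 1, by positivity, fun u => ?_⟩
  calc a u u ≤ ‖a'‖ * ‖u‖ * ‖u‖ := (le_abs_self _).trans (a'.le_opNorm₂ u u)
    _ ≤ (‖a'‖ + 1) * (‖u‖ * ‖u‖) := by rw [mul_assoc]; gcongr; linarith
    _ = (‖a'‖ + 1) * inner ℝ u u := by rw [real_inner_self_eq_norm_mul_norm]

theorem exists_bilinForm_self_le_mul {V : Type*} [AddCommGroup V] [Module ℝ V]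
    [FiniteDimensional ℝ V] (a : LinearMap.BilinForm ℝ V) {b : LinearMap.BilinForm ℝ V}
    (hb : ∀ u ≠ 0, 0 < b u u) : ∃ C > 0, ∀ u, a u u ≤ C * b u u := by
  -- The symmetrization of `b` is an inner product, whose square norm is `2 * b u u`.
  let core : InnerProductSpace.Core ℝ V :=
    { inner := fun u v => (b + b.flip) u v
      conj_inner_symm := fun u v => by simp [add_comm]
      re_inner_nonneg := fun u => by
        rcases eq_or_ne u 0 with rfl | hu
        · simp
        · simpa using (add_pos (hb u hu) (hb u hu)).le
      add_left := fun u v w => by simp only [map_add, LinearMap.add_apply]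
      smul_left := fun u v r => by simp [mul_add]
      definite := fun u hu => by
        by_contra h
        exact (add_pos (hb u h) (hb u h)).ne' hu }
  obtain ⟨C, hC, h⟩ := @exists_bilinForm_self_le_mul_inner V core.toNormedAddCommGroup
    (InnerProductSpace.ofCore core.toCore) _ a
  refine ⟨2 * C, by positivity, fun u => (h u).trans_eq ?_⟩
  rw [mul_comm 2 C, mul_assoc, two_mul]
  rfl

variable {H H' : Type*} [AddCommGroup H] [Module ℝ H] [AddCommGroup H'] [Module ℝ H']

/-- The `k`-th Courant–Fischer min-max value of the form `a` relative to the form `b`: the infimum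
over `k`-dimensional subspaces `W` of the supremum over nonzero `u ∈ W` of the Rayleigh quotient
`a u u / b u u`. When `b` is positive definite and `0 < k`, each supremum is over a bounded set; the
infimum over an empty family of subspaces is `0`. -/
def courantFischer (a b : LinearMap.BilinForm ℝ H) (k : ℕ) : ℝ :=
  ⨅ W : {W : Submodule ℝ H // Module.finrank ℝ W = k},
    ⨆ u : {u : H // u ∈ W.1 ∧ u ≠ 0}, a u u / b u u

theorem bddAbove_rayleigh (a : LinearMap.BilinForm ℝ H) {b : LinearMap.BilinForm ℝ H}
    (hb : ∀ u ≠ 0, 0 < b u u) (W : Submodule ℝ H) [FiniteDimensional ℝ W] :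
    BddAbove (Set.range fun u : {u : H // u ∈ W ∧ u ≠ 0} => a u u / b u u) := by
  obtain ⟨C, -, hC⟩ := exists_bilinForm_self_le_mul
    (a.restrict W) (b := b.restrict W) fun u hu => hb u (by simpa using hu)
  refine ⟨C, ?_⟩
  rintro _ ⟨⟨u, huW, hu⟩, rfl⟩
  exact (div_le_iff₀ (hb u hu)).2 (hC ⟨u, huW⟩)

theorem le_courantFischer {a b : LinearMap.BilinForm ℝ H} (hb : ∀ u ≠ 0, 0 < b u u) {k : ℕ}
    (hk : k ≠ 0) (hW : ∃ W : Submodule ℝ H, Module.finrank ℝ W = k) {c : ℝ}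
    (h : ∀ u, c * b u u ≤ a u u) : c ≤ courantFischer a b k := by
  have : Nonempty {W : Submodule ℝ H // Module.finrank ℝ W = k} := nonempty_subtype.2 hW
  refine le_ciInf fun ⟨W, hWk⟩ => ?_
  have hpos : 0 < Module.finrank ℝ W := hWk ▸ Nat.pos_of_ne_zero hk
  have : FiniteDimensional ℝ W := Module.finite_of_finrank_pos hpos
  have : Nontrivial W := Module.nontrivial_of_finrank_pos hpos
  obtain ⟨u, hu⟩ := exists_ne (0 : W)
  have hu' : (u : H) ≠ 0 := by simpa using hu
  exact ((le_div_iff₀ (hb u hu')).2 (h u)).trans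
    (le_ciSup (bddAbove_rayleigh a hb W) ⟨u, u.2, hu'⟩)

theorem iSup_rayleigh_map {a b : LinearMap.BilinForm ℝ H} {a' b' : LinearMap.BilinForm ℝ H'}
    {T : H →ₗ[ℝ] H'} (hT : Function.Injective T) {c : ℝ} (hc : 0 ≤ c)
    (h : ∀ u, a' (T u) (T u) / b' (T u) (T u) = c * (a u u / b u u)) (W : Submodule ℝ H) :
    ⨆ v : {v : H' // v ∈ W.map T ∧ v ≠ 0}, a' v v / b' v v =
      c * ⨆ u : {u : H // u ∈ W ∧ u ≠ 0}, a u u / b u u := by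
  rw [Real.mul_iSup_of_nonneg hc]
  let g (u : {u : H // u ∈ W ∧ u ≠ 0}) : {v : H' // v ∈ W.map T ∧ v ≠ 0} :=
    ⟨T u, Submodule.mem_map_of_mem u.2.1, (map_ne_zero_iff T hT).2 u.2.2⟩
  have hg : Function.Surjective g := by
    rintro ⟨_, ⟨u, hu, rfl⟩, hu0⟩
    exact ⟨⟨u, hu, (map_ne_zero_iff T hT).1 hu0⟩, rfl⟩
  exact (hg.iSup_congr g fun u => h u).symm

theorem courantFischer_le_mul_of_injective {a b : LinearMap.BilinForm ℝ H}
    {a' b' : LinearMap.BilinForm ℝ H'} (ha' : ∀ u, 0 ≤ a' u u) (hb' : ∀ u, 0 ≤ b' u u)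
    {T : H →ₗ[ℝ] H'} (hT : Function.Injective T) {c : ℝ} (hc : 0 ≤ c)
    (h : ∀ u, a' (T u) (T u) / b' (T u) (T u) = c * (a u u / b u u)) {k : ℕ}
    (hW : ∃ W : Submodule ℝ H, Module.finrank ℝ W = k) :
    courantFischer a' b' k ≤ c * courantFischer a b k := by
  have : Nonempty {W : Submodule ℝ H // Module.finrank ℝ W = k} := nonempty_subtype.2 hW
  have hbdd : BddBelow (Set.range fun W : {W : Submodule ℝ H' // Module.finrank ℝ W = k} =>
      ⨆ u : {u : H' // u ∈ W.1 ∧ u ≠ 0}, a' u u / b' u u) := by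
    refine ⟨0, ?_⟩
    rintro _ ⟨W, rfl⟩
    exact Real.iSup_nonneg fun u => div_nonneg (ha' u) (hb' u)
  rw [courantFischer, courantFischer, Real.mul_iInf_of_nonneg hc]
  refine le_ciInf fun ⟨W, hWk⟩ => ?_
  have hmap : Module.finrank ℝ (W.map T) = k :=
    (Submodule.equivMapOfInjective T hT W).finrank_eq.symm.trans hWk
  exact (ciInf_le hbdd ⟨W.map T, hmap⟩).trans_eq (iSup_rayleigh_map hT hc h W)

end CourantFischer

section TestFunctions

variable {E : Type*} [NormedAddCommGroup E] [NormedSpace ℝ E]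

/-- The space `C_c^∞(Ω)` of smooth functions with compact support in `Ω`, as a subspace of the
functions on the ambient space. -/
def testFunctions (Ω : Set E) : Submodule ℝ (E → ℝ) where
  carrier := {u | ContDiff ℝ (⊤ : ℕ∞) u ∧ HasCompactSupport u ∧ tsupport u ⊆ Ω}
  zero_mem' := ⟨contDiff_const, HasCompactSupport.zero, by simp [tsupport]⟩
  add_mem' := fun {u v} hu hv => ⟨hu.1.add hv.1, hu.2.1.add hv.2.1,
    (tsupport_add u v).trans (Set.union_subset hu.2.2 hv.2.2)⟩
  smul_mem' := fun c u hu => ⟨contDiff_const.smul hu.1, hu.2.1.smul_left (f := fun _ => c),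
    (tsupport_smul_subset_right (fun _ => c) u).trans hu.2.2⟩

namespace testFunctions

variable {Ω Ω' : Set E}

theorem contDiff (u : testFunctions Ω) : ContDiff ℝ (⊤ : ℕ∞) (u : E → ℝ) := u.2.1

theorem continuous (u : testFunctions Ω) : Continuous (u : E → ℝ) := (contDiff u).continuous

theorem differentiable (u : testFunctions Ω) : Differentiable ℝ (u : E → ℝ) :=
  (contDiff u).differentiable (by simp)

theorem hasCompactSupport (u : testFunctions Ω) : HasCompactSupport (u : E → ℝ) := u.2.2.1

theorem apply_eq_zero_of_notMem (u : testFunctions Ω) {x : E} (hx : x ∉ Ω) : u.1 x = 0 :=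
  image_eq_zero_of_notMem_tsupport fun h => hx (u.2.2.2 h)

theorem contDiff_fderiv_apply (u : testFunctions Ω) (v : E) :
    ContDiff ℝ (⊤ : ℕ∞) fun x => fderiv ℝ u.1 x v := by
  have h : ContDiff ℝ (⊤ : ℕ∞) (fderiv ℝ u.1) := (contDiff u).fderiv_right (by simp)
  exact h.clm_apply contDiff_const

/-- The directional derivative `∂_v`, as an operator on `C_c^∞(Ω)`. -/
def dirDeriv (v : E) : testFunctions Ω →ₗ[ℝ] testFunctions Ω where
  toFun u := ⟨fun x => fderiv ℝ u.1 x v, contDiff_fderiv_apply u v,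
    (hasCompactSupport u).fderiv_apply ℝ v, (tsupport_fderiv_apply_subset ℝ v).trans u.2.2.2⟩
  map_add' u w := by
    ext x
    simp [fderiv_add (differentiable u x) (differentiable w x)]
  map_smul' c u := by
    ext x
    simp [fderiv_const_smul (differentiable u x)]

theorem dirDeriv_apply (v : E) (u : testFunctions Ω) (x : E) :
    (dirDeriv v u).1 x = fderiv ℝ u x v := rfl

/-- Transport of test functions along the similarity `y ↦ a + t • y`. -/
def rescale (a : E) {t : ℝ} (ht : t ≠ 0) (h : Set.MapsTo (fun y => a + t • y) Ω Ω') :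
    testFunctions Ω →ₗ[ℝ] testFunctions Ω' where
  toFun u := ⟨u.1 ∘ fun x => t⁻¹ • (x - a), by
    let φ : E ≃ₜ E := (Homeomorph.smulOfNeZero t ht).trans (Homeomorph.addLeft a)
    have hφ : ⇑φ.symm = fun x => t⁻¹ • (x - a) := by
      ext x
      rw [Homeomorph.symm_apply_eq]
      exact (add_eq_of_eq_sub' (smul_inv_smul₀ ht (x - a))).symm
    refine ⟨(contDiff u).comp (by fun_prop), ?_, ?_⟩ <;> rw [← hφ]
    · exact (hasCompactSupport u).comp_homeomorph φ.symm
    · rw [tsupport_comp_eq_preimage, ← Homeomorph.image_eq_preimage_symm]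
      exact Set.image_subset_iff.2 fun y hy => h (u.2.2.2 hy)⟩
  map_add' _ _ := rfl
  map_smul' _ _ := rfl

theorem rescale_apply (a : E) {t : ℝ} (ht : t ≠ 0)
    (h : Set.MapsTo (fun y => a + t • y) Ω Ω') (u : testFunctions Ω) (x : E) :
    (rescale a ht h u).1 x = u.1 (t⁻¹ • (x - a)) := rfl

theorem rescale_injective (a : E) {t : ℝ} (ht : t ≠ 0)
    (h : Set.MapsTo (fun y => a + t • y) Ω Ω') : Function.Injective (rescale a ht h) := by
  intro u w huw
  ext y
  simpa [rescale_apply, inv_smul_smul₀ ht] using congrFun (congrArg Subtype.val huw) (a + t • y)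

theorem dirDeriv_rescale (a : E) {t : ℝ} (ht : t ≠ 0)
    (h : Set.MapsTo (fun y => a + t • y) Ω Ω') (v : E) (u : testFunctions Ω) :
    dirDeriv v (rescale a ht h u) = t⁻¹ • rescale a ht h (dirDeriv v u) := by
  ext x
  have hψ : HasFDerivAt (fun x : E => t⁻¹ • (x - a)) (t⁻¹ • ContinuousLinearMap.id ℝ E) x :=
    ((hasFDerivAt_id x).sub_const a).const_smul t⁻¹
  have hcomp : HasFDerivAt (fun x => u.1 (t⁻¹ • (x - a))) _ x :=
    (differentiable u _).hasFDerivAt.comp x hψ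
  change fderiv ℝ (fun x => u.1 (t⁻¹ • (x - a))) x v = t⁻¹ * fderiv ℝ u.1 (t⁻¹ • (x - a)) v
  rw [hcomp.fderiv]
  simp

theorem exists_finrank_eq [FiniteDimensional ℝ E] [Nontrivial E] (hΩ : IsOpen Ω)
    (hne : Ω.Nonempty) (k : ℕ) :
    ∃ W : Submodule ℝ (testFunctions Ω), Module.finrank ℝ W = k := by
  obtain ⟨x₀, hx₀⟩ := hne
  have : (𝓝[≠] x₀).NeBot := Module.punctured_nhds_neBot ℝ E x₀
  have : Infinite Ω := (infinite_of_mem_nhds x₀ (hΩ.mem_nhds hx₀)).to_subtype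
  let c : Fin k ↪ Ω := Fin.valEmbedding.trans (Infinite.natEmbedding Ω)
  have hnhds (i : Fin k) : Ω \ ((fun j => (c j : E)) '' {i}ᶜ) ∈ 𝓝 (c i : E) := by
    refine (hΩ.sdiff (Set.toFinite _).isClosed).mem_nhds ⟨(c i).2, ?_⟩
    rintro ⟨j, hj, hji⟩
    exact hj (c.injective (Subtype.ext hji))
  choose f hf_supp hf_cpt hf_smooth _ hf_one using
    fun i => exists_contDiff_tsupport_subset (n := ⊤) (hnhds i)
  let bump (i : Fin k) : testFunctions Ω :=
    ⟨f i, hf_smooth i, hf_cpt i, fun x hx => (hf_supp i hx).1⟩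
  let eval : testFunctions Ω →ₗ[ℝ] Fin k → ℝ :=
    LinearMap.funLeft ℝ ℝ (fun j => (c j : E)) ∘ₗ (testFunctions Ω).subtype
  have heval : eval ∘ bump = fun i => Pi.single i 1 := by
    ext i j
    change f i (c j) = _
    rcases eq_or_ne j i with rfl | hji
    · simp [hf_one]
    · rw [Pi.single_eq_of_ne hji]
      exact image_eq_zero_of_notMem_tsupport fun hmem => (hf_supp i hmem).2 ⟨j, hji, rfl⟩
  have hli : LinearIndependent ℝ bump := by
    refine LinearIndependent.of_comp eval ?_
    rw [heval]
    exact Pi.linearIndependent_single_one (Fin k) ℝ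
  exact ⟨Submodule.span ℝ (Set.range bump), by simp [finrank_span_eq_card hli]⟩

variable [MeasurableSpace E] [BorelSpace E] (μ : Measure E)

theorem integrable_mul [IsFiniteMeasureOnCompacts μ] (u w : testFunctions Ω) :
    Integrable (fun x => u.1 x * w.1 x) μ :=
  ((continuous u).mul (continuous w)).integrable_of_hasCompactSupport
    (hasCompactSupport u).mul_right

theorem integrable_mul_mul_of_continuous [IsFiniteMeasureOnCompacts μ] (u w : testFunctions Ω)
    {f : E → ℝ} (hf : Continuous f) : Integrable (fun x => u.1 x * w.1 x * f x) μ :=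
  (((continuous u).mul (continuous w)).mul hf).integrable_of_hasCompactSupport
    (hasCompactSupport u).mul_right.mul_right

/-- The `L²(μ)` inner product on `C_c^∞(Ω)`. -/
def l2Form [IsFiniteMeasureOnCompacts μ] : LinearMap.BilinForm ℝ (testFunctions Ω) :=
  LinearMap.mk₂ ℝ (fun u w => ∫ x, u.1 x * w.1 x ∂μ)
    (fun u u' w => by
      simp only [← integral_add (integrable_mul μ u w) (integrable_mul μ u' w), ← add_mul]; rfl)
    (fun c u w => by simp [mul_assoc, integral_const_mul])
    (fun u w w' => by
      simp only [← integral_add (integrable_mul μ u w) (integrable_mul μ u w'), ← mul_add]; rfl)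
    (fun c u w => by simp [mul_left_comm, integral_const_mul])

theorem l2Form_apply [IsFiniteMeasureOnCompacts μ] (u w : testFunctions Ω) :
    l2Form μ u w = ∫ x, u.1 x * w.1 x ∂μ := rfl

theorem l2Form_self_pos [IsFiniteMeasureOnCompacts μ] [μ.IsOpenPosMeasure] {u : testFunctions Ω}
    (hu : u ≠ 0) : 0 < l2Form μ u u := by
  obtain ⟨x, hx⟩ := Function.ne_iff.1 fun h : u.1 = 0 => hu (Subtype.ext h)
  exact ((continuous u).mul (continuous u)).integral_pos_of_hasCompactSupport_nonneg_nonzero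
    (hasCompactSupport u).mul_right (fun x => mul_self_nonneg _) (mul_self_ne_zero.2 hx)

theorem l2Form_rescale [FiniteDimensional ℝ E] [μ.IsAddHaarMeasure] (a : E) {t : ℝ} (ht : 0 < t)
    (h : Set.MapsTo (fun y => a + t • y) Ω Ω') (u w : testFunctions Ω) :
    l2Form μ (rescale a ht.ne' h u) (rescale a ht.ne' h w) =
      t ^ Module.finrank ℝ E * l2Form μ u w := by
  simp only [l2Form_apply, rescale_apply]
  rw [integral_sub_right_eq_self (fun x => u.1 (t⁻¹ • x) * w.1 (t⁻¹ • x)) a,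
    Measure.integral_comp_inv_smul_of_nonneg μ (fun x => u.1 x * w.1 x) ht.le, smul_eq_mul]

variable [FiniteDimensional ℝ E] [μ.IsAddHaarMeasure]

theorem l2Form_self_eq_integral_mul_dirDeriv {p : E →L[ℝ] ℝ} {v : E} (hpv : p v = 1)
    (u : testFunctions Ω) :
    l2Form μ u u = ∫ x, -(2 * (u.1 x * (dirDeriv v u).1 x) * p x) ∂μ := by
  have hderiv (x : E) :
      fderiv ℝ (fun x => u.1 x * u.1 x) x v = 2 * (u.1 x * (dirDeriv v u).1 x) := by
    rw [fderiv_fun_mul (differentiable u x) (differentiable u x), dirDeriv_apply]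
    simp only [add_apply, smul_apply, smul_eq_mul]
    ring
  have hparts := integral_mul_fderiv_eq_neg_fderiv_mul_of_integrable (μ := μ)
    (f := fun x => u.1 x * u.1 x) (g := p) (v := v)
    (by simpa only [hderiv, mul_assoc] using
      (integrable_mul_mul_of_continuous μ u (dirDeriv v u) p.continuous).const_mul 2)
    (by simpa only [ContinuousLinearMap.fderiv, hpv, mul_one] using integrable_mul μ u u)
    (integrable_mul_mul_of_continuous μ u u p.continuous)
    (fun x _ => (differentiable u x).mul (differentiable u x))
    (fun x _ => p.differentiableAt)
  simpa only [hderiv, ContinuousLinearMap.fderiv, hpv, mul_one, integral_neg, l2Form_apply] using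
    hparts

theorem l2Form_self_le_mul_dirDeriv {p : E →L[ℝ] ℝ} {v : E} (hpv : p v = 1) {R : ℝ}
    (hR : ∀ x ∈ Ω, |p x| ≤ R) (u : testFunctions Ω) :
    l2Form μ u u ≤ 4 * R ^ 2 * l2Form μ (dirDeriv v u) (dirDeriv v u) := by
  set w := dirDeriv v u
  have young (x : E) : -(2 * (u.1 x * w.1 x) * p x) ≤
      1 / 2 * (u.1 x * u.1 x) + 2 * R ^ 2 * (w.1 x * w.1 x) := by
    by_cases hx : x ∈ Ω
    · have hpR : p x ^ 2 ≤ R ^ 2 := sq_le_sq' (abs_le.1 (hR x hx)).1 (abs_le.1 (hR x hx)).2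
      nlinarith [sq_nonneg (u.1 x + 2 * (p x * w.1 x)),
        mul_le_mul_of_nonneg_right hpR (mul_self_nonneg (w.1 x))]
    · simp only [apply_eq_zero_of_notMem _ hx]
      simp
  have hu := (integrable_mul μ u u).const_mul (1 / 2)
  have hw := (integrable_mul μ w w).const_mul (2 * R ^ 2)
  have huw : Integrable (fun x => -(2 * (u.1 x * w.1 x) * p x)) μ := by
    simpa only [mul_assoc, Pi.neg_def] using
      ((integrable_mul_mul_of_continuous μ u w p.continuous).const_mul 2).neg
  have half_bound : l2Form μ u u ≤ 1 / 2 * l2Form μ u u + 2 * R ^ 2 * l2Form μ w w := by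
    calc l2Form μ u u = ∫ x, -(2 * (u.1 x * w.1 x) * p x) ∂μ :=
          l2Form_self_eq_integral_mul_dirDeriv μ hpv u
      _ ≤ ∫ x, (1 / 2 * (u.1 x * u.1 x) + 2 * R ^ 2 * (w.1 x * w.1 x)) ∂μ :=
          integral_mono huw (hu.add hw) young
      _ = 1 / 2 * l2Form μ u u + 2 * R ^ 2 * l2Form μ w w := by
          rw [integral_add hu hw, integral_const_mul, integral_const_mul]; rfl
  linarith

end testFunctions

end TestFunctions

section EnergyForm

open testFunctions

variable {N : ℕ} {Ω Ω' : Set (EuclideanSpace ℝ (Fin N))}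

/-- The Dirichlet form `∫ ∑ a_ij ∂_i u ∂_j w` on `C_c^∞(Ω)`. -/
def energyForm (A : Matrix (Fin N) (Fin N) ℝ) : LinearMap.BilinForm ℝ (testFunctions Ω) :=
  ∑ i, ∑ j, A i j • (l2Form volume).compl₁₂ (dirDeriv (EuclideanSpace.single i 1))
    (dirDeriv (EuclideanSpace.single j 1))

theorem energyForm_self (A : Matrix (Fin N) (Fin N) ℝ) (u : testFunctions Ω) :
    energyForm A u u = ∑ i, ∑ j, A i j *
      l2Form volume (dirDeriv (EuclideanSpace.single i 1) u)
        (dirDeriv (EuclideanSpace.single j 1) u) := by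
  simp [energyForm, LinearMap.sum_apply]

theorem energyForm_self_eq_integral (A : Matrix (Fin N) (Fin N) ℝ) (u : testFunctions Ω) :
    energyForm A u u = ∫ x, ∑ i, ∑ j, A i j *
      fderiv ℝ u.1 x (EuclideanSpace.single i 1) * fderiv ℝ u.1 x (EuclideanSpace.single j 1) := by
  have hint (i j : Fin N) : Integrable fun x => A i j *
      (fderiv ℝ u.1 x (EuclideanSpace.single i 1) * fderiv ℝ u.1 x (EuclideanSpace.single j 1)) :=
    (integrable_mul volume (dirDeriv _ u) (dirDeriv _ u)).const_mul _
  simp only [energyForm_self, mul_assoc]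
  rw [integral_finsetSum _ fun i _ => integrable_finsetSum _ fun j _ => hint i j]
  refine Finset.sum_congr rfl fun i _ => ?_
  rw [integral_finsetSum _ fun j _ => hint i j]
  exact Finset.sum_congr rfl fun j _ => (integral_const_mul _ _).symm

theorem energyForm_rescale (A : Matrix (Fin N) (Fin N) ℝ) (a : EuclideanSpace ℝ (Fin N)) {t : ℝ}
    (ht : 0 < t) (h : Set.MapsTo (fun y => a + t • y) Ω Ω') (u : testFunctions Ω) :
    energyForm A (rescale a ht.ne' h u) (rescale a ht.ne' h u) =
      (t ^ 2)⁻¹ * (t ^ N * energyForm A u u) := by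
  simp only [energyForm_self, dirDeriv_rescale, map_smul, LinearMap.smul_apply,
    l2Form_rescale volume a ht h, finrank_euclideanSpace_fin, smul_eq_mul, Finset.mul_sum]
  refine Finset.sum_congr rfl fun i _ => Finset.sum_congr rfl fun j _ => ?_
  ring

theorem energyForm_self_nonneg {A : Matrix (Fin N) (Fin N) ℝ}
    (hA : ∀ ξ, 0 ≤ ξ ⬝ᵥ A.mulVec ξ) (u : testFunctions Ω) : 0 ≤ energyForm A u u := by
  rw [energyForm_self_eq_integral]
  refine integral_nonneg fun x =>
    (hA fun i => fderiv ℝ u.1 x (EuclideanSpace.single i 1)).trans_eq ?_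
  simp only [dotProduct, Matrix.mulVec, Finset.mul_sum]
  exact Finset.sum_congr rfl fun i _ => Finset.sum_congr rfl fun j _ => by ring

theorem energyForm_single_self (i : Fin N) (u : testFunctions Ω) :
    energyForm (Matrix.single i i 1) u u =
      l2Form volume (dirDeriv (EuclideanSpace.single i 1) u)
        (dirDeriv (EuclideanSpace.single i 1) u) := by
  simp [energyForm_self, Matrix.single_apply, ite_and]

theorem exists_energyForm_self_le_mul {A : Matrix (Fin N) (Fin N) ℝ}
    (hA : ∀ ξ ≠ 0, 0 < ξ ⬝ᵥ A.mulVec ξ) (B : Matrix (Fin N) (Fin N) ℝ) :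
    ∃ C > 0, ∀ (Ω : Set (EuclideanSpace ℝ (Fin N))) (u : testFunctions Ω),
      energyForm B u u ≤ C * energyForm A u u := by
  obtain ⟨C, hC, h⟩ := exists_bilinForm_self_le_mul (Matrix.toBilin' B)
    (b := Matrix.toBilin' A) fun ξ hξ => by simpa only [Matrix.toBilin'_apply'] using hA ξ hξ
  refine ⟨C, hC, fun Ω u => sub_nonneg.1 ?_⟩
  have hnonneg : 0 ≤ energyForm (C • A - B) u u := energyForm_self_nonneg (fun ξ => by
    simpa [Matrix.toBilin'_apply', Matrix.sub_mulVec, Matrix.smul_mulVec, dotProduct_sub]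
      using h ξ) u
  simpa only [energyForm_self, Matrix.sub_apply, Matrix.smul_apply, smul_eq_mul, sub_mul,
    mul_assoc, Finset.sum_sub_distrib, Finset.mul_sum] using hnonneg

theorem exists_mul_l2Form_self_le_energyForm [NeZero N] {D : Set (EuclideanSpace ℝ (Fin N))}
    (hD : Bornology.IsBounded D) {A : Matrix (Fin N) (Fin N) ℝ}
    (hA : ∀ ξ ≠ 0, 0 < ξ ⬝ᵥ A.mulVec ξ) :
    ∃ c > 0, ∀ Ω ⊆ D, ∀ u : testFunctions Ω, c * l2Form volume u u ≤ energyForm A u u := by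
  obtain ⟨R, hR, hDR⟩ := hD.exists_pos_norm_le
  obtain ⟨C, hC, hCA⟩ := exists_energyForm_self_le_mul hA (Matrix.single 0 0 1)
  refine ⟨(4 * R ^ 2 * C)⁻¹, by positivity, fun Ω hΩ u => ?_⟩
  rw [inv_mul_le_iff₀ (by positivity)]
  have hcoord : ∀ x ∈ Ω, |EuclideanSpace.proj (𝕜 := ℝ) (0 : Fin N) x| ≤ R := fun x hx =>
    (PiLp.norm_apply_le x 0).trans (hDR x (hΩ hx))
  calc l2Form volume u u
      ≤ 4 * R ^ 2 * energyForm (Matrix.single 0 0 1) u u := by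
        rw [energyForm_single_self]
        exact l2Form_self_le_mul_dirDeriv volume (by simp) hcoord u
    _ ≤ 4 * R ^ 2 * C * energyForm A u u := by
        rw [mul_assoc _ C]
        gcongr
        exact hCA Ω u

end EnergyForm

section DirichletEigenvalues

open testFunctions

variable {N : ℕ} {Ω Ω' : Set (EuclideanSpace ℝ (Fin N))}

theorem rayleighQuot_eq_div (A : Matrix (Fin N) (Fin N) ℝ) (u : testFunctions Ω) :
    rayleighQuot A Ω u = energyForm A u u / l2Form volume u u := by
  have hfderiv (x) (hx : x ∉ Ω) : fderiv ℝ u.1 x = 0 :=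
    image_eq_zero_of_notMem_tsupport fun h => hx (u.2.2.2 (tsupport_fderiv_subset ℝ h))
  rw [rayleighQuot, energyForm_self_eq_integral, l2Form_apply]
  congr 1
  · exact setIntegral_eq_integral_of_forall_compl_eq_zero fun x hx => by simp [hfderiv x hx]
  · simp only [← sq]
    exact setIntegral_eq_integral_of_forall_compl_eq_zero fun x hx => by
      simp [apply_eq_zero_of_notMem u hx]

theorem sSup_rayleighQuot_map_subtype (A : Matrix (Fin N) (Fin N) ℝ)
    (W : Submodule ℝ (testFunctions Ω)) :
    sSup {q : ℝ | ∃ u ∈ W.map (testFunctions Ω).subtype, u ≠ 0 ∧ q = rayleighQuot A Ω u} =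
      ⨆ u : {u : testFunctions Ω // u ∈ W ∧ u ≠ 0},
        energyForm A u.1 u.1 / l2Form volume u.1 u.1 := by
  refine congrArg sSup (Set.ext fun q => ⟨?_, ?_⟩)
  · rintro ⟨_, ⟨u, hu, rfl⟩, hu0, rfl⟩
    exact ⟨⟨u, hu, fun h => hu0 (by simp [h])⟩, (rayleighQuot_eq_div A u).symm⟩
  · rintro ⟨⟨u, hu, hu0⟩, rfl⟩
    exact ⟨u, Submodule.mem_map_of_mem hu, by simpa using hu0, (rayleighQuot_eq_div A u).symm⟩

theorem lamk_eq_courantFischer (A : Matrix (Fin N) (Fin N) ℝ)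
    (Ω : Set (EuclideanSpace ℝ (Fin N))) (k : ℕ) :
    lamk A Ω k = courantFischer (energyForm (Ω := Ω) A) (l2Form volume) k := by
  refine congrArg sInf (Set.ext fun μ => ⟨?_, ?_⟩)
  · rintro ⟨V, rfl, hV, rfl⟩
    have hVΩ : V ≤ testFunctions Ω := hV
    have hmap : (V.comap (testFunctions Ω).subtype).map (testFunctions Ω).subtype = V :=
      Submodule.map_comap_eq_of_le (by rwa [Submodule.range_subtype])
    refine ⟨⟨V.comap (testFunctions Ω).subtype, ?_⟩, ?_⟩
    · rw [← Submodule.finrank_map_subtype_eq, hmap]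
    · simp only [← sSup_rayleighQuot_map_subtype, hmap]
  · rintro ⟨⟨W, rfl⟩, rfl⟩
    refine ⟨W.map (testFunctions Ω).subtype, Submodule.finrank_map_subtype_eq _ W, ?_,
      (sSup_rayleighQuot_map_subtype A W).symm⟩
    rintro _ ⟨u, -, rfl⟩
    exact u.2

theorem sq_mul_lamk_le_of_mapsTo [NeZero N] {A : Matrix (Fin N) (Fin N) ℝ}
    (hA : ∀ ξ, 0 ≤ ξ ⬝ᵥ A.mulVec ξ) (hΩ : IsOpen Ω) (hne : Ω.Nonempty)
    {a : EuclideanSpace ℝ (Fin N)} {t : ℝ} (ht : 0 < t)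
    (h : Set.MapsTo (fun y => a + t • y) Ω Ω') (k : ℕ) :
    t ^ 2 * lamk A Ω' k ≤ lamk A Ω k := by
  rw [lamk_eq_courantFischer, lamk_eq_courantFischer, ← le_inv_mul_iff₀ (by positivity)]
  refine courantFischer_le_mul_of_injective (energyForm_self_nonneg hA) (fun u => ?_)
    (rescale_injective a ht.ne' h) (by positivity) (fun u => ?_) (exists_finrank_eq hΩ hne k)
  · exact integral_nonneg fun x => mul_self_nonneg _
  · rw [energyForm_rescale A a ht h, l2Form_rescale volume a ht h, finrank_euclideanSpace_fin,
      mul_div_assoc, mul_div_mul_left _ _ (by positivity)]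

theorem dotProduct_mulVec_self_nonneg_of_pos {n : Type*} [Fintype n] {A : Matrix n n ℝ}
    (hA : ∀ ξ ≠ 0, 0 < ξ ⬝ᵥ A.mulVec ξ) (ξ : n → ℝ) : 0 ≤ ξ ⬝ᵥ A.mulVec ξ := by
  rcases eq_or_ne ξ 0 with rfl | hξ
  · simp
  · exact (hA ξ hξ).le

theorem exists_lamk_bounds [NeZero N] {D : Set (EuclideanSpace ℝ (Fin N))}
    (hD : Bornology.IsBounded D) {m : ENNReal} (hm : m ≠ 0) {A : Matrix (Fin N) (Fin N) ℝ}
    (hA : ∀ ξ ≠ 0, 0 < ξ ⬝ᵥ A.mulVec ξ) {k : ℕ} (hk : k ≠ 0) :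
    ∃ c C, 0 < c ∧ c ≤ C ∧ ∀ Ω ⊆ D, IsOpen Ω → Convex ℝ Ω → m ≤ volume Ω →
      c ≤ lamk A Ω k ∧ lamk A Ω k ≤ C := by
  have hA_nonneg := dotProduct_mulVec_self_nonneg_of_pos hA
  obtain ⟨c, hc, hpoincare⟩ := exists_mul_l2Form_self_le_energyForm hD hA
  obtain ⟨r, hr, hball⟩ := exists_forall_ball_subset_of_le_measure volume hD hm
  refine ⟨c, max c ((r ^ 2)⁻¹ * lamk A (ball 0 1) k), hc, le_max_left _ _,
    fun Ω hΩD hΩ hΩc hΩm => ⟨?_, le_max_of_le_right ?_⟩⟩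
  · have hne : Ω.Nonempty :=
      nonempty_of_measure_ne_zero ((pos_iff_ne_zero.2 hm).trans_le hΩm).ne'
    rw [lamk_eq_courantFischer]
    exact le_courantFischer (fun u hu => l2Form_self_pos volume hu) hk
      (exists_finrank_eq hΩ hne k) (hpoincare Ω hΩD)
  · obtain ⟨x, hx⟩ := hball Ω hΩD hΩ hΩc hΩm
    rw [le_inv_mul_iff₀ (by positivity)]
    refine sq_mul_lamk_le_of_mapsTo hA_nonneg isOpen_ball (nonempty_ball.2 one_pos) (a := x) hr
      (fun y hy => hx ?_) k
    rw [mem_ball, dist_self_add_left, norm_smul, Real.norm_of_nonneg hr.le]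
    exact mul_lt_of_lt_one_right hr (mem_ball_zero_iff.1 hy)

theorem tendsto_lamk {ι : Type*} {l : Filter ι} [NeZero N] {A : Matrix (Fin N) (Fin N) ℝ}
    (hA : ∀ ξ, 0 ≤ ξ ⬝ᵥ A.mulVec ξ) {Ω : ι → Set (EuclideanSpace ℝ (Fin N))}
    {L : Set (EuclideanSpace ℝ (Fin N))} (hΩ : ∀ i, IsOpen (Ω i)) (hΩc : ∀ i, Convex ℝ (Ω i))
    (hL : IsOpen L) (hLc : Convex ℝ L) (hne : L.Nonempty)
    (hlim : ∀ ε > 0, ∀ᶠ i in l, Ω i ⊆ thickening ε L ∧ L ⊆ thickening ε (Ω i)) (k : ℕ) :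
    Tendsto (fun i => lamk A (Ω i) k) l (𝓝 (lamk A L k)) := by
  obtain ⟨x, hx⟩ := hne
  obtain ⟨r, hr, hxr⟩ := Metric.isOpen_iff.1 hL x hx
  refine tendsto_of_forall_eventually_mul_le fun s hs => ?_
  have hs_sq : √s ^ 2 = s := Real.sq_sqrt hs.1.le
  have hs_pos : 0 < √s := Real.sqrt_pos.2 hs.1
  have hs_lt : √s < 1 := by
    rw [Real.sqrt_lt' one_pos]
    simpa using hs.2
  have hε : 0 < (1 - √s) * (r / 2) := mul_pos (sub_pos.2 hs_lt) (half_pos hr)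
  filter_upwards [hlim _ (half_pos hr), hlim _ (half_pos hε)] with i hi hi'
  have hball : ball x (r / 2) ⊆ Ω i := by
    simpa only [sub_half] using
      ball_sub_subset_of_subset_thickening (hΩ i) (hΩc i) (half_pos hr) (hxr.trans hi.2)
  have hball' : ball x (r / 2) ⊆ L := (ball_subset_ball (half_le_self hr.le)).trans hxr
  have hne_i : (Ω i).Nonempty := ⟨x, hball (mem_ball_self (half_pos hr))⟩
  have to_L := mapsTo_contraction_of_subset_thickening (hΩc i) hL hLc (half_pos hr) hball
    hs_pos.le hs_lt (half_lt_self hε) hi'.1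
  have from_L := mapsTo_contraction_of_subset_thickening hLc (hΩ i) (hΩc i) (half_pos hr) hball'
    hs_pos.le hs_lt (half_lt_self hε) hi'.2
  rw [← hs_sq]
  exact ⟨sq_mul_lamk_le_of_mapsTo hA (hΩ i) hne_i hs_pos to_L k,
    sq_mul_lamk_le_of_mapsTo hA hL ⟨x, hx⟩ hs_pos from_L k⟩

end DirichletEigenvalues

theorem eigenvalue_bounded_continuous_const_coeff_general {N : ℕ} [NeZero N]
    (A : Matrix (Fin N) (Fin N) ℝ) (hA : ∀ ξ ≠ 0, 0 < ξ ⬝ᵥ A.mulVec ξ) {k : ℕ} (hk : k ≠ 0) :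
    (∀ D : Set (EuclideanSpace ℝ (Fin N)), Bornology.IsBounded D → ∀ m : ENNReal, m ≠ 0 →
      ∃ c C, 0 < c ∧ c ≤ C ∧ ∀ Ω ⊆ D, IsOpen Ω → Convex ℝ Ω → m ≤ volume Ω →
        c ≤ lamk A Ω k ∧ lamk A Ω k ≤ C) ∧
    (∀ (Ωn : ℕ → Set (EuclideanSpace ℝ (Fin N))) (L : Set (EuclideanSpace ℝ (Fin N))),
      (∀ n, IsOpen (Ωn n)) → (∀ n, Convex ℝ (Ωn n)) → IsOpen L → Convex ℝ L → L.Nonempty →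
      UnifConvTo Ωn L →
      Tendsto (fun n => lamk A (Ωn n) k) atTop (𝓝 (lamk A L k))) := by
  exact ⟨fun D hD m hm => exists_lamk_bounds hD hm hA hk,
    fun Ωn L hΩ hΩc hL hLc hne hlim =>
      tendsto_lamk (dotProduct_mulVec_self_nonneg_of_pos hA) hΩ hΩc hL hLc hne hlim k⟩

/-- The `k`-th Dirichlet eigenvalue of a constant-coefficient elliptic operator is a
bounded and continuous functional on `C_m(D)` for the uniform convergence. -/
theorem eigenvalue_bounded_continuous_const_coeff {N : ℕ} (hN : 2 ≤ N)
    (D : Set (EuclideanSpace ℝ (Fin N))) (hD : IsCompact D)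
    (m : ℝ) (hm : 0 < m) (hne : ∃ Ω, InCm D m Ω)
    (A : Matrix (Fin N) (Fin N) ℝ) (hA_symm : A.IsSymm) (hA_pos : A.PosDef)
    (k : ℕ) (hk : 1 ≤ k) :
    (∃ c C : ℝ, 0 < c ∧ c ≤ C ∧ ∀ Ω, InCm D m Ω → c ≤ lamk A Ω k ∧ lamk A Ω k ≤ C) ∧
    (∀ (Ωn : ℕ → Set (EuclideanSpace ℝ (Fin N))) (L : Set (EuclideanSpace ℝ (Fin N))),
      (∀ n, InCm D m (Ωn n)) → InCm D m L → UnifConvTo Ωn L →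
      Filter.Tendsto (fun n => lamk A (Ωn n) k) Filter.atTop (nhds (lamk A L k))) := by
  have : NeZero N := ⟨by lia⟩
  have hA (ξ : Fin N → ℝ) (hξ : ξ ≠ 0) : 0 < ξ ⬝ᵥ A.mulVec ξ := by
    simpa using hA_pos.dotProduct_mulVec_pos hξ
  obtain ⟨hbounds, hcont⟩ := eigenvalue_bounded_continuous_const_coeff_general A hA
    (Nat.one_le_iff_ne_zero.1 hk)
  have hm' : ENNReal.ofReal m ≠ 0 := (ENNReal.ofReal_pos.2 hm).ne'
  refine ⟨?_, fun Ωn L hΩ hL hlim => ?_⟩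
  · obtain ⟨c, C, hc, hcC, h⟩ := hbounds D hD.isBounded _ hm'
    exact ⟨c, C, hc, hcC, fun Ω ⟨hΩD, hΩo, hΩc, hΩm⟩ => h Ω hΩD hΩo hΩc hΩm.ge⟩
  · exact hcont Ωn L (fun n => (hΩ n).2.1) (fun n => (hΩ n).2.2.1) hL.2.1 hL.2.2.1
      (nonempty_of_measure_ne_zero (hL.2.2.2 ▸ hm')) hlim
end
end
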